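/- arXiv:1907.03439 — 2 statements merged into one kernel-verified Lean document; each statement's English description precedes it below -/
import Mathlib

section
/- Let A = (A_1,…,A_n) be a nonnegative vector in ℝ^n and D = n + A_1 + ⋯ + A_n. Then for every continuously differentiable function f : ℝ^n → ℝ with compact support satisfying ∫_{ℝ^n_A} |f|^2 x^A dx = 1, one has ∫_{ℝ^n_A} |f|^2 log(|f|^2) x^A dx ≤ (D/2) · log( (2/(Π(A) e D)) ∫_{ℝ^n_A} |∇f|^2 x^A dx ), where log(|f|^2) is understood so that |f|^2 log(|f|^2) = 0 at points where f = 0. -/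
open MeasureTheory Real Filter

noncomputable section

/-- The positivity region `ℝ^n_A = {x : x_i > 0 whenever A_i > 0}`. -/
def monSet {ι : Type*} [Fintype ι] (A : ι → ℝ) : Set (EuclideanSpace ℝ ι) :=
  {x | ∀ i, 0 < A i → 0 < x i}

/-- The monomial weight `x^A = ∏ |x_i|^{A_i}`. -/
def monWeight {ι : Type*} [Fintype ι] (A : ι → ℝ) (x : EuclideanSpace ℝ ι) : ℝ :=
  ∏ i, |x i| ^ A i

/-- The homogeneous dimension `D = n + A_1 + ⋯ + A_n`. -/
def monDim {ι : Type*} [Fintype ι] (A : ι → ℝ) : ℝ :=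
  (Fintype.card ι : ℝ) + ∑ i, A i

/-- `k = #{i : A_i > 0}`. -/
def monK {ι : Type*} [Fintype ι] (A : ι → ℝ) : ℕ :=
  Nat.card {i : ι // 0 < A i}

/-- `Π(A) = [ (∏ Γ((A_i+1)/2)) / 2^k ]^{2/D}`. -/
def monPi {ι : Type*} [Fintype ι] (A : ι → ℝ) : ℝ :=
  ((∏ i, Gamma ((A i + 1) / 2)) / 2 ^ monK A) ^ (2 / monDim A)

section OneDim
open Set Topology

/-- The distribution function of a density `h` on `I`. -/
def cdfOn (I : Set ℝ) (h : ℝ → ℝ) (x : ℝ) : ℝ := ∫ y in Iic x, I.indicator h y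

variable {I : Set ℝ} {h : ℝ → ℝ}

lemma cdfOn_eq_add (hI : MeasurableSet I) (hi : IntegrableOn h I) (x : ℝ) :
    cdfOn I h x = cdfOn I h 0 + ∫ y in (0 : ℝ)..x, I.indicator h y := by
  have hk : Integrable (I.indicator h) := (integrable_indicator_iff hI).2 hi
  rw [← intervalIntegral.integral_Iic_sub_Iic hk.integrableOn hk.integrableOn]
  simp [cdfOn]

lemma continuous_cdfOn (hI : MeasurableSet I) (hi : IntegrableOn h I) :
    Continuous (cdfOn I h) := by
  have hk : Integrable (I.indicator h) := (integrable_indicator_iff hI).2 hi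
  rw [funext (cdfOn_eq_add hI hi)]
  exact continuous_const.add
    (intervalIntegral.continuous_primitive (fun a b => hk.intervalIntegrable) 0)

lemma hasDerivAt_cdfOn (hI : IsOpen I) (hi : IntegrableOn h I) (hc : ContinuousOn h I)
    {x : ℝ} (hx : x ∈ I) : HasDerivAt (cdfOn I h) (h x) x := by
  have hk : Integrable (I.indicator h) := (integrable_indicator_iff hI.measurableSet).2 hi
  have hev : I.indicator h =ᶠ[𝓝 x] h := by
    filter_upwards [hI.mem_nhds hx] with y hy using indicator_of_mem hy h
  have hcx : ContinuousAt (I.indicator h) x :=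
    (hc.continuousAt (hI.mem_nhds hx)).congr hev.symm
  have := intervalIntegral.integral_hasDerivAt_right (hk.intervalIntegrable (a := 0) (b := x))
    hk.aestronglyMeasurable.stronglyMeasurableAtFilter hcx
  rw [indicator_of_mem hx] at this
  rw [funext (cdfOn_eq_add hI.measurableSet hi)]
  exact this.const_add _

lemma strictMonoOn_cdfOn (hI : IsOpen I) (hoc : I.OrdConnected) (hi : IntegrableOn h I)
    (hc : ContinuousOn h I) (hpos : ∀ x ∈ I, 0 < h x) : StrictMonoOn (cdfOn I h) I := by
  refine strictMonoOn_of_deriv_pos hoc.convex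
    (continuous_cdfOn hI.measurableSet hi).continuousOn fun x hx => ?_
  rw [hI.interior_eq] at hx
  rw [(hasDerivAt_cdfOn hI hi hc hx).deriv]
  exact hpos x hx

lemma cdfOn_mem_Ioo (hI : IsOpen I) (hu : IsUpperSet I) (hi : IntegrableOn h I)
    (hc : ContinuousOn h I) (hpos : ∀ x ∈ I, 0 < h x) (h1 : ∫ x in I, h x = 1)
    {x : ℝ} (hx : x ∈ I) : cdfOn I h x ∈ Ioo 0 1 := by
  have hk : Integrable (I.indicator h) := (integrable_indicator_iff hI.measurableSet).2 hi
  have hk0 : ∀ y, 0 ≤ I.indicator h y := indicator_nonneg fun y hy => (hpos y hy).le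
  have hm := strictMonoOn_cdfOn hI hu.ordConnected hi hc hpos
  constructor
  · obtain ⟨y, hy, hyI⟩ := (Filter.Eventually.and self_mem_nhdsWithin
      (mem_nhdsWithin_of_mem_nhds (hI.mem_nhds hx)) : ∀ᶠ y in 𝓝[<] x, y ∈ Iio x ∧ y ∈ I).exists
    exact (integral_nonneg hk0).trans_lt (hm hyI hx hy)
  · have hx1 : x + 1 ∈ I := hu (by linarith) hx
    refine (hm hx hx1 (by linarith)).trans_le ?_
    rw [← h1, ← integral_indicator hI.measurableSet]
    exact setIntegral_le_integral hk (ae_of_all _ hk0)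

lemma exists_cdfOn_eq (hI : IsOpen I) (hu : IsUpperSet I) (hi : IntegrableOn h I)
    (h1 : ∫ x in I, h x = 1) {u : ℝ} (hu1 : u ∈ Ioo (0 : ℝ) 1) : ∃ x ∈ I, cdfOn I h x = u := by
  have hk : Integrable (I.indicator h) := (integrable_indicator_iff hI.measurableSet).2 hi
  have hbot : Tendsto (cdfOn I h) atBot (𝓝 0) := tendsto_integral_Iic_zero tendsto_id
  have htop : Tendsto (cdfOn I h) atTop (𝓝 1) := by
    rw [← h1, ← integral_indicator hI.measurableSet]
    exact (aecover_Iic tendsto_id).integral_tendsto_of_countably_generated hk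
  obtain ⟨a, ha⟩ := (hbot.eventually (gt_mem_nhds hu1.1)).exists
  obtain ⟨b, hb⟩ := (htop.eventually (lt_mem_nhds hu1.2)).exists
  obtain ⟨x, hx⟩ := mem_range_of_exists_le_of_exists_ge (continuous_cdfOn hI.measurableSet hi)
    ⟨a, ha.le⟩ ⟨b, hb.le⟩
  refine ⟨x, ?_, hx⟩
  by_contra hxI
  have h0 : cdfOn I h x = 0 := by
    refine setIntegral_eq_zero_of_forall_eq_zero fun y hy => indicator_of_notMem (fun hyI => hxI (hu hy hyI)) _
  linarith [hu1.1]

/-- The monotone transport map between two densities on an open upper set of the line. -/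
lemma exists_monotone_transport {r g : ℝ → ℝ} (hI : IsOpen I) (hu : IsUpperSet I)
    (hri : IntegrableOn r I) (hrc : ContinuousOn r I) (hrpos : ∀ x ∈ I, 0 < r x)
    (hr1 : ∫ x in I, r x = 1)
    (hgi : IntegrableOn g I) (hgc : ContinuousOn g I) (hgpos : ∀ x ∈ I, 0 < g x)
    (hg1 : ∫ x in I, g x = 1) :
    ∃ T : ℝ → ℝ, StrictMonoOn T I ∧ T '' I = I ∧
      ∀ x ∈ I, HasDerivAt T (g x / r (T x)) x := by
  have hmr := strictMonoOn_cdfOn hI hu.ordConnected hri hrc hrpos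
  have hmg := strictMonoOn_cdfOn hI hu.ordConnected hgi hgc hgpos
  choose! S hSI hS using fun u (hu1 : u ∈ Ioo (0 : ℝ) 1) => exists_cdfOn_eq hI hu hri hr1 hu1
  have hSmono : StrictMonoOn S (Ioo 0 1) := by
    intro u hu1 v hv1 huv
    by_contra hle
    have := (hmr.le_iff_le (hSI v hv1) (hSI u hu1)).2 (not_lt.1 hle)
    rw [hS u hu1, hS v hv1] at this
    linarith
  have hSr : ∀ y ∈ I, S (cdfOn I r y) = y := fun y hy => by
    have hm := cdfOn_mem_Ioo hI hu hri hrc hrpos hr1 hy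
    exact hmr.injOn (hSI _ hm) hy (hS _ hm)
  have hSim : S '' Ioo 0 1 = I := by
    ext y
    constructor
    · rintro ⟨u, hu1, rfl⟩; exact hSI u hu1
    · exact fun hy => ⟨_, cdfOn_mem_Ioo hI hu hri hrc hrpos hr1 hy, hSr y hy⟩
  have hSd : ∀ u ∈ Ioo (0 : ℝ) 1, HasDerivAt S (r (S u))⁻¹ u := fun u hu1 => by
    refine HasDerivAt.of_local_left_inverse (f := cdfOn I r) ?_
      (hasDerivAt_cdfOn hI hri hrc (hSI u hu1)) (hrpos _ (hSI u hu1)).ne' ?_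
    · refine hSmono.continuousAt_of_image_mem_nhds (Ioo_mem_nhds hu1.1 hu1.2) ?_
      rw [hSim]
      exact hI.mem_nhds (hSI u hu1)
    · filter_upwards [Ioo_mem_nhds hu1.1 hu1.2] with v hv using hS v hv
  have hG : ∀ x ∈ I, cdfOn I g x ∈ Ioo (0 : ℝ) 1 := fun x hx =>
    cdfOn_mem_Ioo hI hu hgi hgc hgpos hg1 hx
  refine ⟨fun x => S (cdfOn I g x), fun x hx y hy hxy => hSmono (hG x hx) (hG y hy)
    (hmg hx hy hxy), ?_, fun x hx => ?_⟩
  · ext y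
    constructor
    · rintro ⟨x, hx, rfl⟩; exact hSI _ (hG x hx)
    · intro hy
      obtain ⟨x, hx, hxe⟩ := exists_cdfOn_eq hI hu hgi hg1
        (cdfOn_mem_Ioo hI hu hri hrc hrpos hr1 hy)
      exact ⟨x, hx, by simp only [hxe, hSr y hy]⟩
  · have := (hSd _ (hG x hx)).comp x (hasDerivAt_cdfOn hI hgi hgc hx)
    rw [div_eq_inv_mul]
    exact this

end OneDim

section OneDim
open Set Topology

lemma exists_seq_tendsto_atTop_of_integrableOn {f : ℝ → ℝ} {c : ℝ} (hf : IntegrableOn f (Ioi c)) :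
    ∃ b : ℕ → ℝ, (∀ k, c < b k) ∧ Tendsto b atTop atTop ∧ Tendsto (fun k => f (b k)) atTop (𝓝 0) := by
  have key : ∀ k : ℕ, ∃ x, max c k < x ∧ |f x| < 1 / ((k : ℝ) + 1) := by
    intro k
    by_contra! hcon
    have hint : IntegrableOn (fun _ : ℝ => 1 / ((k : ℝ) + 1)) (Ioi (max c k)) := by
      refine Integrable.mono (hf.mono_set (Ioi_subset_Ioi (le_max_left _ _))) (by fun_prop) ?_
      refine (ae_restrict_iff' measurableSet_Ioi).2 (ae_of_all _ fun x hx => ?_)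
      rw [Real.norm_eq_abs, Real.norm_eq_abs, abs_of_pos (by positivity)]
      exact hcon x hx
    rw [integrableOn_const_iff] at hint
    rcases hint with h0 | h0
    · have : (0 : ℝ) < 1 / ((k : ℝ) + 1) := by positivity
      simp at h0
      linarith
    · simp at h0
  choose b hb1 hb2 using key
  refine ⟨b, fun k => (le_max_left _ _).trans_lt (hb1 k), ?_, ?_⟩
  · exact tendsto_atTop_mono (fun k => ((le_max_right _ _).trans_lt (hb1 k)).le)
      tendsto_natCast_atTop_atTop
  · exact squeeze_zero_norm (fun k => (hb2 k).le) tendsto_one_div_add_atTop_nhds_zero_nat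

/-- If `g ≤ f'` where `f` is integrable and has no boundary contribution, then `∫ g ≤ 0`. -/
lemma setIntegral_nonpos_of_le_deriv {I : Set ℝ} {f f' g : ℝ → ℝ}
    (hI : I = univ ∨ I = Ioi 0 ∧ Tendsto f (𝓝[>] 0) (𝓝 0))
    (hd : ∀ x ∈ I, HasDerivAt f (f' x) x) (hgf : ∀ x ∈ I, g x ≤ f' x)
    (hg : IntegrableOn g I) (hf : IntegrableOn f I) : ∫ x in I, g x ≤ 0 := by
  have step : ∀ a ∈ I, ∀ b, a ≤ b → ∫ x in a..b, g x ≤ f b - f a := by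
    intro a ha b hab
    have hsub : Icc a b ⊆ I := by
      rcases hI with rfl | ⟨rfl, -⟩
      · exact subset_univ _
      · exact fun x hx => lt_of_lt_of_le ha hx.1
    exact intervalIntegral.integral_le_sub_of_hasDeriv_right_of_le hab
      (fun x hx => (hd x (hsub hx)).continuousAt.continuousWithinAt)
      (fun x hx => (hd x (hsub (Ioo_subset_Icc_self hx))).hasDerivWithinAt)
      (hg.mono_set hsub) (fun x hx => hgf x (hsub (Ioo_subset_Icc_self hx)))
  obtain ⟨b, hb0, hbt, hfb⟩ := exists_seq_tendsto_atTop_of_integrableOn (c := 1) (f := f)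
    (hf.mono_set (by
      rcases hI with rfl | ⟨rfl, -⟩
      · exact subset_univ _
      · exact Ioi_subset_Ioi zero_le_one))
  rcases hI with rfl | ⟨rfl, hf0⟩
  · obtain ⟨a, ha0, hat, hfa⟩ := exists_seq_tendsto_atTop_of_integrableOn (c := 1)
      (f := fun x => f (-x)) (by
        rw [integrableOn_univ] at hf
        exact hf.comp_neg.integrableOn)
    rw [setIntegral_univ]
    rw [integrableOn_univ] at hg
    have h1 := intervalIntegral_tendsto_integral hg (tendsto_neg_atTop_atBot.comp hat) hbt
    have h2 := hfb.sub hfa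
    rw [sub_zero] at h2
    refine le_of_tendsto_of_tendsto' h1 h2 fun k => step _ (mem_univ _) _ ?_
    have := ha0 k; have := hb0 k
    simp only [Function.comp]
    linarith
  · have ha0 : ∀ k : ℕ, (0 : ℝ) < 1 / ((k : ℝ) + 1) := fun k => by positivity
    have hat : Tendsto (fun k : ℕ => 1 / ((k : ℝ) + 1)) atTop (𝓝[>] 0) :=
      tendsto_nhdsWithin_iff.2 ⟨tendsto_one_div_add_atTop_nhds_zero_nat,
        Eventually.of_forall ha0⟩
    have h2 := hfb.sub (hf0.comp hat)
    rw [sub_zero] at h2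
    have hii : ∀ x y : ℝ, 0 ≤ x → 0 ≤ y → IntervalIntegrable g volume x y := fun x y hx hy =>
      (intervalIntegrable_iff.2 (hg.mono_set fun z hz => lt_of_le_of_lt (le_min hx hy) hz.1))
    have h1 : Tendsto (fun k : ℕ => ∫ x in (1 / ((k : ℝ) + 1))..(b k), g x) atTop
        (𝓝 (∫ x in Ioi 0, g x)) := by
      have hp := intervalIntegral_tendsto_integral_Ioi 0 hg hbt
      have hc : Tendsto (fun k : ℕ => ∫ x in (0 : ℝ)..(1 / ((k : ℝ) + 1)), g x) atTop (𝓝 0) := by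
        have hk := (integrable_indicator_iff measurableSet_Ioi).2 hg
        have hcont := (intervalIntegral.continuous_primitive
          (fun a b => hk.intervalIntegrable (a := a) (b := b)) 0).tendsto 0
        rw [intervalIntegral.integral_same] at hcont
        refine (hcont.comp tendsto_one_div_add_atTop_nhds_zero_nat).congr fun k => ?_
        refine intervalIntegral.integral_congr_ae (ae_of_all _ fun x hx => ?_)
        rw [uIoc_of_le (ha0 k).le] at hx
        exact indicator_of_mem (show x ∈ Ioi 0 from hx.1) g
      have := hp.sub hc
      rw [sub_zero] at this
      refine this.congr fun k => ?_
      have := hb0 k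
      exact intervalIntegral.integral_interval_sub_left (hii _ _ le_rfl (by linarith))
        (hii _ _ le_rfl (ha0 k).le)
    refine le_of_tendsto_of_tendsto' h1 h2 fun k => step _ (ha0 k) _ ?_
    have := hb0 k
    have h3 : 1 / ((k : ℝ) + 1) ≤ 1 := by
      rw [div_le_one (by positivity)]
      have : (0 : ℝ) ≤ k := by positivity
      linarith
    linarith

/-- Logarithmic Sobolev inequality for a uniformly log-concave density, normalized case. -/
lemma logSobolev_density_normalized {I : Set ℝ} {r s F F' : ℝ → ℝ} {t ε M : ℝ}
    (hI : I = univ ∨ I = Ioi 0 ∧ Tendsto r (𝓝[>] 0) (𝓝 0)) (ht : 0 < t)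
    (hrpos : ∀ x ∈ I, 0 < r x) (hrd : ∀ x ∈ I, HasDerivAt r (s x * r x) x)
    (hcurv : ∀ x ∈ I, ∀ y ∈ I, log (r y) ≤ log (r x) + s x * (y - x) - t / 2 * (y - x) ^ 2)
    (hri : IntegrableOn r I) (hr1 : ∫ x in I, r x = 1) (hri1 : IntegrableOn (fun x => x * r x) I)
    (hε : 0 < ε) (hF : ∀ x, ε ≤ F x ∧ F x ≤ M) (hFd : ∀ x, HasDerivAt F (F' x) x)
    (hF'c : Continuous F') (hF' : ∀ x, |F' x| ≤ M) (hF1 : ∫ x in I, F x * r x = 1) :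
    ∫ x in I, (F x * log (F x) - (2 * t)⁻¹ * (F' x ^ 2 / F x)) * r x ≤ 0 := by
  have hIo : IsOpen I := by
    rcases hI with rfl | ⟨rfl, -⟩
    exacts [isOpen_univ, isOpen_Ioi]
  have hIu : IsUpperSet I := by
    rcases hI with rfl | ⟨rfl, -⟩
    exacts [isUpperSet_univ, isUpperSet_Ioi 0]
  have hFpos : ∀ x, 0 < F x := fun x => hε.trans_le (hF x).1
  have hFc : Continuous F := continuous_iff_continuousAt.2 fun x => (hFd x).continuousAt
  have hrc : ContinuousOn r I := fun x hx => (hrd x hx).continuousAt.continuousWithinAt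
  have hbdd : ∀ {φ ψ : ℝ → ℝ} (C : ℝ), Continuous φ → (∀ x, |φ x| ≤ C) →
      IntegrableOn ψ I → IntegrableOn (fun x => φ x * ψ x) I := fun C hφ hC hψ =>
    Integrable.bdd_mul hψ hφ.aestronglyMeasurable (ae_of_all _ hC)
  have hFabs : ∀ x, |F x| ≤ M := fun x => by rw [abs_of_pos (hFpos x)]; exact (hF x).2
  have hFr : IntegrableOn (fun x => F x * r x) I := hbdd M hFc hFabs hri
  obtain ⟨T, hTm, hTI, hTd⟩ := exists_monotone_transport (r := r) (g := fun x => F x * r x)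
    hIo hIu hri hrc hrpos hr1 hFr (hFc.continuousOn.mul hrc)
    (fun x hx => mul_pos (hFpos x) (hrpos x hx)) hF1
  have hTmem : ∀ x ∈ I, T x ∈ I := fun x hx => by rw [← hTI]; exact mem_image_of_mem T hx
  refine setIntegral_nonpos_of_le_deriv (f := fun x => (T x - x) * (F x * r x))
    (f' := fun x => (F x * r x / r (T x) - 1) * (F x * r x) +
      (T x - x) * (F' x * r x + F x * (s x * r x))) ?_ ?_ ?_ ?_ ?_
  · rcases hI with h | ⟨rfl, h0⟩
    · exact Or.inl h
    · refine Or.inr ⟨rfl, ?_⟩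
      have h1 : Tendsto (fun x => (T 1 + 1) * (M * r x)) (𝓝[>] 0) (𝓝 0) := by
        simpa using (h0.const_mul M).const_mul (T 1 + 1)
      refine squeeze_zero_norm' ?_ h1
      filter_upwards [Ioo_mem_nhdsGT (zero_lt_one (α := ℝ))] with x hx
      have hxI : x ∈ Ioi (0 : ℝ) := hx.1
      have h1I : (1 : ℝ) ∈ Ioi (0 : ℝ) := zero_lt_one (α := ℝ)
      have hT1 : T x < T 1 := hTm hxI h1I hx.2
      have hT0 : 0 < T x := hTmem x hxI
      have hrx := hrpos x hxI
      rw [norm_mul, Real.norm_eq_abs, Real.norm_eq_abs, abs_of_pos (mul_pos (hFpos x) hrx)]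
      have hT2 : |T x - x| ≤ T 1 + 1 := by
        rw [abs_le]; constructor <;> linarith [hx.1, hx.2]
      have hFM := (hF x).2
      have hT3 : 0 ≤ T 1 + 1 := (abs_nonneg _).trans hT2
      have hFx := (hFpos x).le
      gcongr
  · intro x hx
    exact ((hTd x hx).sub (hasDerivAt_id x)).mul ((hFd x).mul (hrd x hx))
  · intro x hx
    have hc := hcurv x hx (T x) (hTmem x hx)
    have hrx := hrpos x hx
    have hrT := hrpos _ (hTmem x hx)
    have hFx := hFpos x
    have hlog := log_le_sub_one_of_pos (div_pos (mul_pos hFx hrx) hrT)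
    rw [log_div (mul_pos hFx hrx).ne' hrT.ne', log_mul hFx.ne' hrx.ne'] at hlog
    have hlF : log (F x) ≤ F x * r x / r (T x) - 1 + s x * (T x - x) - t / 2 * (T x - x) ^ 2 := by
      linarith
    have hsq : -(F' x * (T x - x)) - t / 2 * (T x - x) ^ 2 * F x ≤ (2 * t)⁻¹ * (F' x ^ 2 / F x) := by
      have : (2 * t)⁻¹ * (F' x ^ 2 / F x) - (-(F' x * (T x - x)) - t / 2 * (T x - x) ^ 2 * F x)
          = (F' x + t * F x * (T x - x)) ^ 2 / (2 * t * F x) := by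
        field_simp
        ring
      have h2 : 0 ≤ (F' x + t * F x * (T x - x)) ^ 2 / (2 * t * F x) := by positivity
      linarith
    have := mul_le_mul_of_nonneg_left hlF hFx.le
    have h3 : F x * log (F x) - (2 * t)⁻¹ * (F' x ^ 2 / F x) ≤
        F x * (F x * r x / r (T x) - 1 + s x * (T x - x)) + F' x * (T x - x) := by
      linarith
    calc _ ≤ (F x * (F x * r x / r (T x) - 1 + s x * (T x - x)) + F' x * (T x - x)) * r x :=
          mul_le_mul_of_nonneg_right h3 hrx.le
      _ = _ := by ring
  · have hc1 : Continuous fun x => F x * log (F x) := hFc.mul (hFc.log fun x => (hFpos x).ne')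
    have hc2 : Continuous fun x => (2 * t)⁻¹ * (F' x ^ 2 / F x) :=
      continuous_const.mul ((hF'c.pow 2).div hFc fun x => (hFpos x).ne')
    refine hbdd (M * (|log ε| + |log M|) + (2 * t)⁻¹ * (M ^ 2 / ε)) (hc1.sub hc2) (fun x => ?_) hri
    have hM : 0 ≤ M := (abs_nonneg _).trans (hFabs x)
    refine (abs_sub _ _).trans ?_
    gcongr
    · rw [abs_mul]
      gcongr
      · exact hFabs x
      · have l1 := log_le_log hε (hF x).1
        have l2 := log_le_log (hFpos x) (hF x).2
        rw [abs_le]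
        constructor <;> linarith [neg_abs_le (log ε), le_abs_self (log M), abs_nonneg (log ε),
          abs_nonneg (log M)]
    · rw [abs_of_nonneg (by have := hFpos x; positivity)]
      have hsq : F' x ^ 2 ≤ M ^ 2 := sq_le_sq' (abs_le.1 (hF' x)).1 (abs_le.1 (hF' x)).2
      have hFε := (hF x).1
      gcongr
  · have h1 : IntegrableOn (fun x => T x * (F x * r x)) I := by
      rw [← hTI, integrableOn_image_iff_integrableOn_abs_deriv_smul hIo.measurableSet
        (fun x hx => (hTd x hx).hasDerivWithinAt) hTm.injOn] at hri1
      refine hri1.congr_fun (fun x hx => ?_) hIo.measurableSet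
      have hrT := hrpos _ (hTmem x hx)
      have hFr := mul_pos (hFpos x) (hrpos x hx)
      simp only [smul_eq_mul]
      rw [abs_of_pos (div_pos hFr hrT)]
      field_simp
    have h2 : IntegrableOn (fun x => F x * (x * r x)) I := hbdd M hFc hFabs hri1
    refine (h1.sub h2).congr_fun (fun x _ => ?_) hIo.measurableSet
    simp only [Pi.sub_apply]
    ring

end OneDim

section OneDim
open Set Topology

lemma exists_bound_mul_log (M : ℝ) : ∃ C, ∀ u, 0 ≤ u → u ≤ M → |u * log u| ≤ C := by
  obtain ⟨C, hC⟩ := (isCompact_Icc (a := (0 : ℝ)) (b := M)).exists_bound_of_continuousOn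
    continuous_mul_log.continuousOn
  exact ⟨C, fun u h0 h1 => hC u ⟨h0, h1⟩⟩

lemma integrable_of_abs_le {α : Type*} [MeasurableSpace α] {μ : Measure α} [IsFiniteMeasure μ]
    {f : α → ℝ} (hf : Measurable f) (C : ℝ) (hC : ∀ x, |f x| ≤ C) : Integrable f μ :=
  Integrable.of_bound hf.aestronglyMeasurable C (ae_of_all _ hC)

/-- The logarithmic Sobolev inequality with constant `t` for functions bounded away from zero. -/
def HasLogSobolev (μ : Measure ℝ) (t : ℝ) : Prop :=
  ∀ (F F' : ℝ → ℝ) (ε M : ℝ), 0 < ε → (∀ x, ε ≤ F x ∧ F x ≤ M) → (∀ x, HasDerivAt F (F' x) x) →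
    Continuous F' → (∀ x, |F' x| ≤ M) →
    ∫ x, F x * log (F x) ∂μ - (∫ x, F x ∂μ) * log (∫ x, F x ∂μ) ≤
      (2 * t)⁻¹ * ∫ x, F' x ^ 2 / F x ∂μ

/-- One-dimensional factor of the positivity region. -/
def monInterval (a : ℝ) : Set ℝ := {x | 0 < a → 0 < x}

lemma monInterval_zero : monInterval 0 = univ := by simp [monInterval]

lemma monInterval_of_pos {a : ℝ} (ha : 0 < a) : monInterval a = Ioi 0 := by
  ext x; simp [monInterval, ha]

lemma measurableSet_monInterval (a : ℝ) : MeasurableSet (monInterval a) := by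
  by_cases ha : 0 < a
  · rw [monInterval_of_pos ha]; exact measurableSet_Ioi
  · simp [monInterval, ha]

/-- Unnormalized one-dimensional density `|x|^a e^{-t x²/2}`. -/
def gaussWeight (a t x : ℝ) : ℝ := |x| ^ a * exp (-(t / 2) * x ^ 2)

/-- Normalization of `gaussWeight`. -/
def gaussMass (a t : ℝ) : ℝ := ∫ x in monInterval a, gaussWeight a t x

/-- Probability measure on `monInterval a` with density proportional to `gaussWeight a t`. -/
def gaussMeasure (a t : ℝ) : Measure ℝ :=
  (volume.restrict (monInterval a)).withDensity
    fun x => ENNReal.ofReal ((gaussMass a t)⁻¹ * gaussWeight a t x)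

variable {a t : ℝ}

lemma measurable_gaussWeight : Measurable (gaussWeight a t) := by
  unfold gaussWeight
  fun_prop

lemma integrableOn_gaussWeight (ha : 0 ≤ a) (ht : 0 < t) :
    IntegrableOn (gaussWeight a t) (monInterval a) := by
  rcases ha.eq_or_lt with rfl | ha
  · rw [monInterval_zero, integrableOn_univ]
    have := integrable_exp_neg_mul_sq (half_pos ht)
    have h0 : gaussWeight 0 t = fun x : ℝ => exp (-(t / 2) * x ^ 2) := by
      funext y; simp [gaussWeight]
    rw [h0]
    exact this
  · rw [monInterval_of_pos ha]
    refine (integrableOn_rpow_mul_exp_neg_mul_sq (half_pos ht) (s := a) (by linarith)).congr_fun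
      (fun x hx => ?_) measurableSet_Ioi
    rw [gaussWeight, abs_of_pos hx]

lemma integrableOn_mul_gaussWeight (ha : 0 ≤ a) (ht : 0 < t) :
    IntegrableOn (fun x => x * gaussWeight a t x) (monInterval a) := by
  rcases ha.eq_or_lt with rfl | ha
  · rw [monInterval_zero, integrableOn_univ]
    have := integrable_mul_exp_neg_mul_sq (half_pos ht)
    simpa [gaussWeight] using this
  · rw [monInterval_of_pos ha]
    refine (integrableOn_rpow_mul_exp_neg_mul_sq (half_pos ht) (s := a + 1)
      (by linarith)).congr_fun (fun x hx => ?_) measurableSet_Ioi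
    have hx0 : (0 : ℝ) < x := hx
    simp only [gaussWeight]
    rw [abs_of_pos hx0, rpow_add_one hx0.ne']
    ring

lemma gaussWeight_pos (ha : 0 ≤ a) {x : ℝ} (hx : x ∈ monInterval a) : 0 < gaussWeight a t x := by
  rcases ha.eq_or_lt with rfl | ha
  · simp [gaussWeight, exp_pos]
  · have : 0 < |x| := abs_pos.2 (hx ha).ne'
    unfold gaussWeight
    positivity

lemma gaussWeight_nonneg (x : ℝ) : 0 ≤ gaussWeight a t x := by
  unfold gaussWeight
  positivity

lemma gaussMass_pos (ha : 0 ≤ a) (ht : 0 < t) : 0 < gaussMass a t := by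
  refine (setIntegral_pos_iff_support_of_nonneg_ae (ae_of_all _ gaussWeight_nonneg)
    (integrableOn_gaussWeight ha ht)).2 ?_
  have hsub : Ioi 0 ⊆ Function.support (gaussWeight a t) ∩ monInterval a := fun x hx => by
    have hx' : x ∈ monInterval a := fun _ => hx
    exact ⟨(gaussWeight_pos ha hx').ne', hx'⟩
  refine lt_of_lt_of_le ?_ (measure_mono hsub)
  simp

lemma integral_gaussMeasure (ha : 0 ≤ a) (ht : 0 < t) (h : ℝ → ℝ) :
    ∫ x, h x ∂gaussMeasure a t =
      ∫ x in monInterval a, h x * ((gaussMass a t)⁻¹ * gaussWeight a t x) := by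
  have hZ := gaussMass_pos ha ht
  rw [gaussMeasure, integral_withDensity_eq_integral_toReal_smul
    (by have := measurable_gaussWeight (a := a) (t := t); fun_prop)
    (ae_of_all _ fun x => ENNReal.ofReal_lt_top)]
  refine integral_congr_ae (ae_of_all _ fun x => ?_)
  simp only [smul_eq_mul]
  rw [ENNReal.toReal_ofReal (mul_nonneg (inv_nonneg.2 hZ.le) (gaussWeight_nonneg x)), mul_comm]

lemma setIntegral_gaussDensity (ha : 0 ≤ a) (ht : 0 < t) :
    ∫ x in monInterval a, (gaussMass a t)⁻¹ * gaussWeight a t x = 1 := by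
  rw [integral_const_mul]
  exact inv_mul_cancel₀ (gaussMass_pos ha ht).ne'

lemma isProbabilityMeasure_gaussMeasure (ha : 0 ≤ a) (ht : 0 < t) :
    IsProbabilityMeasure (gaussMeasure a t) := by
  refine ⟨?_⟩
  rw [gaussMeasure, withDensity_apply _ MeasurableSet.univ, Measure.restrict_univ,
    ← ofReal_integral_eq_lintegral_ofReal
      ((integrableOn_gaussWeight ha ht).const_mul _)
      (ae_of_all _ fun x => mul_nonneg (inv_nonneg.2 (gaussMass_pos ha ht).le)
        (gaussWeight_nonneg x)),
    setIntegral_gaussDensity ha ht, ENNReal.ofReal_one]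

lemma hasDerivAt_gaussWeight (ha : 0 ≤ a) {x : ℝ} (hx : x ∈ monInterval a) :
    HasDerivAt (gaussWeight a t) ((a / x - t * x) * gaussWeight a t x) x := by
  have he : HasDerivAt (fun x : ℝ => exp (-(t / 2) * x ^ 2))
      (exp (-(t / 2) * x ^ 2) * (-(t / 2) * (2 * x))) x := by
    have := ((hasDerivAt_pow 2 x).const_mul (-(t / 2))).exp
    simpa using this
  rcases ha.eq_or_lt with rfl | ha
  · have h0 : gaussWeight 0 t = fun x : ℝ => exp (-(t / 2) * x ^ 2) := by
      funext y; simp [gaussWeight]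
    rw [h0]
    convert he using 1
    ring
  · have hx0 : 0 < x := hx ha
    have h1 := (hasDerivAt_rpow_const (p := a) (Or.inl hx0.ne')).mul he
    have hev : gaussWeight a t =ᶠ[𝓝 x] fun x => x ^ a * exp (-(t / 2) * x ^ 2) := by
      filter_upwards [lt_mem_nhds hx0] with y hy
      rw [gaussWeight, abs_of_pos hy]
    refine (HasDerivAt.congr_of_eventuallyEq h1 hev).congr_deriv ?_
    rw [gaussWeight, abs_of_pos hx0, rpow_sub_one hx0.ne']
    ring

lemma log_gaussWeight_le (ha : 0 ≤ a) {x y : ℝ} (hx : x ∈ monInterval a)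
    (hy : y ∈ monInterval a) :
    log (gaussWeight a t y) ≤
      log (gaussWeight a t x) + (a / x - t * x) * (y - x) - t / 2 * (y - x) ^ 2 := by
  rcases ha.eq_or_lt with rfl | ha
  · simp only [gaussWeight, rpow_zero, one_mul, log_exp, zero_div, zero_sub]
    nlinarith
  · have hx0 : 0 < x := hx ha
    have hy0 : 0 < y := hy ha
    simp only [gaussWeight, abs_of_pos hx0, abs_of_pos hy0]
    rw [log_mul (by positivity) (by positivity), log_mul (by positivity) (by positivity),
      log_rpow hx0, log_rpow hy0, log_exp, log_exp]
    have h1 := log_le_sub_one_of_pos (div_pos hy0 hx0)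
    rw [log_div hy0.ne' hx0.ne'] at h1
    have h2 := mul_le_mul_of_nonneg_left h1 ha.le
    have h3 : a / x * (y - x) = a * (y / x - 1) := by field_simp
    nlinarith

lemma hasLogSobolev_gaussMeasure (ha : 0 ≤ a) (ht : 0 < t) :
    HasLogSobolev (gaussMeasure a t) t := by
  intro F F' ε M hε hF hFd hF'c hF'
  have hprob := isProbabilityMeasure_gaussMeasure ha ht
  set μ := gaussMeasure a t
  have hZ := gaussMass_pos ha ht
  have hFpos : ∀ x, 0 < F x := fun x => hε.trans_le (hF x).1
  have hFc : Continuous F := continuous_iff_continuousAt.2 fun x => (hFd x).continuousAt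
  have hFi : Integrable F μ := integrable_of_abs_le hFc.measurable M fun x => by
    rw [abs_of_pos (hFpos x)]; exact (hF x).2
  set m := ∫ x, F x ∂μ with hm
  have hmpos : 0 < m := by
    have : ε ≤ m := by
      have := integral_mono (integrable_const ε) hFi fun x => (hF x).1
      simpa using this
    linarith
  have key := logSobolev_density_normalized (I := monInterval a)
    (r := fun x => (gaussMass a t)⁻¹ * gaussWeight a t x) (s := fun x => a / x - t * x)
    (F := fun x => F x / m) (F' := fun x => F' x / m) (t := t) (ε := ε / m) (M := M / m)
    ?_ ht (fun x hx => mul_pos (inv_pos.2 hZ) (gaussWeight_pos ha hx))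
    (fun x hx => ?_) (fun x hx y hy => ?_) ((integrableOn_gaussWeight ha ht).const_mul _)
    (setIntegral_gaussDensity ha ht) ?_ (div_pos hε hmpos)
    (fun x => ⟨by have := (hF x).1; gcongr, by have := (hF x).2; gcongr⟩)
    (fun x => (hFd x).div_const m) (hF'c.div_const m)
    (fun x => by rw [abs_div, abs_of_pos hmpos]; have := hF' x; gcongr) ?_
  · rw [← integral_gaussMeasure ha ht
      (fun x => F x / m * log (F x / m) - (2 * t)⁻¹ * ((F' x / m) ^ 2 / (F x / m)))] at key
    have hpt : ∀ x, F x / m * log (F x / m) - (2 * t)⁻¹ * ((F' x / m) ^ 2 / (F x / m)) =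
        m⁻¹ * ((F x * log (F x) - log m * F x) - (2 * t)⁻¹ * (F' x ^ 2 / F x)) := fun x => by
      have := hFpos x
      rw [log_div (hFpos x).ne' hmpos.ne']
      field_simp
    simp only [hpt] at key
    obtain ⟨C, hC⟩ := exists_bound_mul_log M
    have hi1 : Integrable (fun x => F x * log (F x)) μ :=
      integrable_of_abs_le (by have := hFc.measurable; fun_prop) C
        fun x => hC _ (hFpos x).le (hF x).2
    have hi2 : Integrable (fun x => F' x ^ 2 / F x) μ := by
      refine integrable_of_abs_le
        (by have := hFc.measurable; have := hF'c.measurable; fun_prop) (M ^ 2 / ε) fun x => ?_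
      have h1 : F' x ^ 2 ≤ M ^ 2 := sq_le_sq' (abs_le.1 (hF' x)).1 (abs_le.1 (hF' x)).2
      have h2 := (hF x).1
      rw [abs_of_nonneg (by have := hFpos x; positivity)]
      gcongr
    have hi3 : Integrable (fun x => F x * log (F x) - log m * F x) μ := hi1.sub (hFi.const_mul _)
    rw [show gaussMeasure a t = μ from rfl, integral_const_mul, integral_sub hi3 (hi2.const_mul _),
      integral_sub hi1 (hFi.const_mul _), integral_const_mul, integral_const_mul, ← hm] at key
    have := nonpos_of_mul_nonpos_right key (inv_pos.2 hmpos)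
    linarith
  · rcases ha.eq_or_lt with rfl | ha
    · exact Or.inl monInterval_zero
    · refine Or.inr ⟨monInterval_of_pos ha, ?_⟩
      have hc : Continuous fun x => (gaussMass a t)⁻¹ * gaussWeight a t x := by
        unfold gaussWeight
        have : Continuous fun x : ℝ => |x| ^ a := continuous_abs.rpow_const fun x => Or.inr ha.le
        fun_prop
      have := (hc.tendsto 0).mono_left (nhdsWithin_le_nhds (s := Ioi 0))
      simpa [gaussWeight, zero_rpow ha.ne'] using this
  · refine ((hasDerivAt_gaussWeight (t := t) ha hx).const_mul (gaussMass a t)⁻¹).congr_deriv ?_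
    ring
  · have h1 := log_gaussWeight_le (t := t) ha hx hy
    rw [log_mul (inv_pos.2 hZ).ne' (gaussWeight_pos ha hx).ne',
      log_mul (inv_pos.2 hZ).ne' (gaussWeight_pos ha hy).ne']
    linarith
  · refine IntegrableOn.congr_fun ((integrableOn_mul_gaussWeight ha ht).const_mul (gaussMass a t)⁻¹)
      (fun x _ => ?_) (measurableSet_monInterval a)
    ring
  · rw [← integral_gaussMeasure ha ht (fun x => F x / m), integral_div, ← hm,
      div_self hmpos.ne']

end OneDim

section Tensorization
open Set Topology

/-- Subadditivity of entropy on a product of two probability spaces. -/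
lemma entropy_prod_le {α β : Type*} [MeasurableSpace α] [MeasurableSpace β]
    {μ : Measure α} {ν : Measure β} [IsProbabilityMeasure μ] [IsProbabilityMeasure ν]
    {F : α × β → ℝ} (hFm : Measurable F) {ε M : ℝ} (hε : 0 < ε) (hF : ∀ p, ε ≤ F p ∧ F p ≤ M) :
    ∫ p, F p * log (F p) ∂μ.prod ν - (∫ p, F p ∂μ.prod ν) * log (∫ p, F p ∂μ.prod ν) ≤
      (∫ y, (∫ x, F (x, y) * log (F (x, y)) ∂μ
        - (∫ x, F (x, y) ∂μ) * log (∫ x, F (x, y) ∂μ)) ∂ν) +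
      ∫ x, (∫ y, F (x, y) * log (F (x, y)) ∂ν
        - (∫ y, F (x, y) ∂ν) * log (∫ y, F (x, y) ∂ν)) ∂μ := by
  have hFpos : ∀ p, 0 < F p := fun p => hε.trans_le (hF p).1
  have hFabs : ∀ p, |F p| ≤ M := fun p => by rw [abs_of_pos (hFpos p)]; exact (hF p).2
  set F1 : β → ℝ := fun y => ∫ x, F (x, y) ∂μ with hF1
  set F2 : α → ℝ := fun x => ∫ y, F (x, y) ∂ν with hF2
  set m := ∫ p, F p ∂μ.prod ν with hm
  obtain ⟨C, hC⟩ := exists_bound_mul_log M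
  have hF1m : Measurable F1 := hFm.stronglyMeasurable.integral_prod_left'.measurable
  have hF2m : Measurable F2 := hFm.stronglyMeasurable.integral_prod_right'.measurable
  have hFi : Integrable F (μ.prod ν) := integrable_of_abs_le hFm M hFabs
  have hsl1 : ∀ y, Integrable (fun x => F (x, y)) μ := fun y =>
    integrable_of_abs_le (by fun_prop) M fun x => hFabs _
  have hsl2 : ∀ x, Integrable (fun y => F (x, y)) ν := fun x =>
    integrable_of_abs_le (by fun_prop) M fun y => hFabs _
  have hF1b : ∀ y, ε ≤ F1 y ∧ F1 y ≤ M := fun y => by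
    constructor
    · simpa using integral_mono (integrable_const ε) (hsl1 y) fun x => (hF (x, y)).1
    · simpa using integral_mono (hsl1 y) (integrable_const M) fun x => (hF (x, y)).2
  have hF2b : ∀ x, ε ≤ F2 x ∧ F2 x ≤ M := fun x => by
    constructor
    · simpa using integral_mono (integrable_const ε) (hsl2 x) fun y => (hF (x, y)).1
    · simpa using integral_mono (hsl2 x) (integrable_const M) fun y => (hF (x, y)).2
  have hmpos : 0 < m := by
    have : ε ≤ m := by simpa using integral_mono (integrable_const ε) hFi fun p => (hF p).1
    linarith
  have hF1pos : ∀ y, 0 < F1 y := fun y => hε.trans_le (hF1b y).1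
  have hF2pos : ∀ x, 0 < F2 x := fun x => hε.trans_le (hF2b x).1
  have hlogb : ∀ u, ε ≤ u → u ≤ M → |log u| ≤ |log ε| + |log M| := fun u h1 h2 => by
    have l1 := log_le_log hε h1
    have l2 := log_le_log (hε.trans_le h1) h2
    rw [abs_le]
    constructor <;> linarith [neg_abs_le (log ε), le_abs_self (log M), abs_nonneg (log ε),
      abs_nonneg (log M)]
  have hM : 0 ≤ M := by
    obtain ⟨y⟩ := ν.nonempty_of_neZero
    exact (hF1pos y).le.trans (hF1b y).2
  have hmulb : ∀ p u, ε ≤ u → u ≤ M → |F p * log u| ≤ M * (|log ε| + |log M|) := fun p u h1 h2 => by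
    rw [abs_mul]
    exact mul_le_mul (hFabs p) (hlogb u h1 h2) (abs_nonneg _) hM
  have i0 : Integrable (fun p => F p * log (F p)) (μ.prod ν) :=
    integrable_of_abs_le (by fun_prop) _ fun p => hmulb p _ (hF p).1 (hF p).2
  have i1 : Integrable (fun p : α × β => F p * log (F1 p.2)) (μ.prod ν) :=
    integrable_of_abs_le (by fun_prop) _ fun p => hmulb p _ (hF1b p.2).1 (hF1b p.2).2
  have i2 : Integrable (fun p : α × β => F p * log (F2 p.1)) (μ.prod ν) :=
    integrable_of_abs_le (by fun_prop) _ fun p => hmulb p _ (hF2b p.1).1 (hF2b p.1).2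
  have i3 : Integrable (fun p : α × β => F2 p.1 * F1 p.2 / m) (μ.prod ν) := by
    refine integrable_of_abs_le (by fun_prop) (M * M / m) fun p => ?_
    have h1 := (hF1b p.2).2
    have h2 := (hF2b p.1).2
    have h3 := (hF1pos p.2).le
    have h4 := (hF2pos p.1).le
    rw [abs_of_nonneg (by positivity)]
    gcongr
  have e1 : ∫ p : α × β, F p * log (F1 p.2) ∂μ.prod ν = ∫ y, F1 y * log (F1 y) ∂ν := by
    rw [integral_prod_symm _ i1]
    exact integral_congr_ae (ae_of_all _ fun y => integral_mul_const (log (F1 y)) fun x => F (x, y))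
  have e2 : ∫ p : α × β, F p * log (F2 p.1) ∂μ.prod ν = ∫ x, F2 x * log (F2 x) ∂μ := by
    rw [integral_prod _ i2]
    exact integral_congr_ae (ae_of_all _ fun x => integral_mul_const (log (F2 x)) fun y => F (x, y))
  have e3 : ∫ p : α × β, F2 p.1 * F1 p.2 / m ∂μ.prod ν = m := by
    rw [integral_div, integral_prod_mul F2 F1]
    have h1 : ∫ y, F1 y ∂ν = m := (integral_prod_symm _ hFi).symm
    have h2 : ∫ x, F2 x ∂μ = m := (integral_prod _ hFi).symm
    rw [h1, h2]
    field_simp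
  have pt : ∀ p : α × β, F p - F2 p.1 * F1 p.2 / m ≤
      F p * log (F p) + F p * log m - F p * log (F1 p.2) - F p * log (F2 p.1) := fun p => by
    have hp := hFpos p
    have h1 := hF1pos p.2
    have h2 := hF2pos p.1
    have := log_le_sub_one_of_pos (show 0 < F2 p.1 * F1 p.2 / (m * F p) by positivity)
    rw [log_div (by positivity) (by positivity), log_mul h2.ne' h1.ne',
      log_mul hmpos.ne' hp.ne'] at this
    have h3 := mul_le_mul_of_nonneg_left this hp.le
    have h4 : F p * (F2 p.1 * F1 p.2 / (m * F p) - 1) = F2 p.1 * F1 p.2 / m - F p := by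
      field_simp
    rw [h4] at h3
    linarith
  have hint := integral_mono (hFi.sub i3) (((i0.add (hFi.mul_const (log m))).sub i1).sub i2) pt
  have hR : ∫ p, (((fun p => F p * log (F p)) + fun p => F p * log m) -
      (fun p : α × β => F p * log (F1 p.2)) - fun p : α × β => F p * log (F2 p.1)) p ∂μ.prod ν =
      ∫ p, F p * log (F p) ∂μ.prod ν + m * log m - ∫ y, F1 y * log (F1 y) ∂ν
        - ∫ x, F2 x * log (F2 x) ∂μ := by
    rw [integral_sub' ((i0.add (hFi.mul_const (log m))).sub i1) i2,
      integral_sub' (i0.add (hFi.mul_const (log m))) i1, integral_add' i0 (hFi.mul_const (log m)),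
      integral_mul_const, e1, e2]
  rw [hR, integral_sub' hFi i3, e3, ← hm, sub_self] at hint
  have j1 : Integrable (fun y => F1 y * log (F1 y)) ν :=
    integrable_of_abs_le (by fun_prop) C fun y => hC _ (hF1pos y).le (hF1b y).2
  have j2 : Integrable (fun x => F2 x * log (F2 x)) μ :=
    integrable_of_abs_le (by fun_prop) C fun x => hC _ (hF2pos x).le (hF2b x).2
  have s1 : ∫ y, (∫ x, F (x, y) * log (F (x, y)) ∂μ - F1 y * log (F1 y)) ∂ν =
      ∫ p, F p * log (F p) ∂μ.prod ν - ∫ y, F1 y * log (F1 y) ∂ν := by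
    rw [integral_sub i0.integral_prod_right j1, integral_prod_symm _ i0]
  have s2 : ∫ x, (∫ y, F (x, y) * log (F (x, y)) ∂ν - F2 x * log (F2 x)) ∂μ =
      ∫ p, F p * log (F p) ∂μ.prod ν - ∫ x, F2 x * log (F2 x) ∂μ := by
    rw [integral_sub i0.integral_prod_left j2, integral_prod _ i0]
  have t1 : ∫ y, (∫ x, F (x, y) * log (F (x, y)) ∂μ
      - (∫ x, F (x, y) ∂μ) * log (∫ x, F (x, y) ∂μ)) ∂ν = _ := s1
  have t2 : ∫ x, (∫ y, F (x, y) * log (F (x, y)) ∂ν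
      - (∫ y, F (x, y) ∂ν) * log (∫ y, F (x, y) ∂ν)) ∂μ = _ := s2
  linarith

/-- Tensorization of the logarithmic Sobolev inequality. -/
lemma logSobolev_pi {t : ℝ} {n : ℕ} (μ : Fin n → Measure ℝ)
    [∀ i, IsProbabilityMeasure (μ i)] (hμ : ∀ i, HasLogSobolev (μ i) t)
    {F : (Fin n → ℝ) → ℝ} {ε M : ℝ} (hε : 0 < ε) (hF : ∀ x, ε ≤ F x ∧ F x ≤ M)
    (hFd : ContDiff ℝ 1 F) (hF' : ∀ x i, |fderiv ℝ F x (Pi.single i 1)| ≤ M) :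
    ∫ x, F x * log (F x) ∂Measure.pi μ
        - (∫ x, F x ∂Measure.pi μ) * log (∫ x, F x ∂Measure.pi μ) ≤
      (2 * t)⁻¹ * ∫ x, ∑ i, fderiv ℝ F x (Pi.single i 1) ^ 2 / F x ∂Measure.pi μ := by
  induction n with
  | zero =>
    have h : ∀ g : (Fin 0 → ℝ) → ℝ, ∫ x, g x ∂Measure.pi μ = g default := fun g => by
      rw [Measure.pi_of_empty, integral_dirac]
      congr 1
      exact Subsingleton.elim _ _
    simp [h]
  | succ n ih =>
    set ν := Measure.pi fun i : Fin n => μ i.succ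
    let L := Fin.consEquivL ℝ fun _ : Fin (n + 1) => ℝ
    have hint : ∀ g : (Fin (n + 1) → ℝ) → ℝ,
        ∫ x, g x ∂Measure.pi μ = ∫ p, g (L p) ∂(μ 0).prod ν := fun g => by
      have := (measurePreserving_piFinSuccAbove μ 0).symm.integral_comp' g
      rw [← this]
      refine integral_congr_ae (ae_of_all _ fun p => ?_)
      refine congrArg g (funext fun i => ?_)
      refine Fin.cases ?_ (fun j => ?_) i <;> simp [L, Fin.consEquivL]
    have hLm : Measurable L := L.continuous.measurable
    have hLc : Continuous L := L.continuous
    have hFpos : ∀ x, 0 < F x := fun x => hε.trans_le (hF x).1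
    have hFc : Continuous F := hFd.continuous
    have hdF : Differentiable ℝ F := hFd.differentiable (by norm_num)
    have hF'c : Continuous (fderiv ℝ F) := hFd.continuous_fderiv (by norm_num)
    have hpart : ∀ v, Continuous fun x => fderiv ℝ F x v := fun v => hF'c.clm_apply continuous_const
    have hL0 : ∀ y : Fin n → ℝ, ∀ x, HasDerivAt (fun x : ℝ => L (x, y)) (Pi.single 0 1) x := by
      intro y x
      rw [hasDerivAt_pi]
      intro i
      refine Fin.cases ?_ (fun j => ?_) i
      · simpa [L, Fin.consEquivL] using hasDerivAt_id' x
      · simpa [L, Fin.consEquivL] using hasDerivAt_const x (y j)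
    have hLs : ∀ i : Fin n, L (0, Pi.single i 1) = Pi.single i.succ 1 := by
      intro i
      ext j
      refine Fin.cases ?_ (fun k => ?_) j
      · simp [L, Fin.consEquivL]
      · simp [L, Fin.consEquivL, Pi.single_apply]
    have hsd : ∀ x y (i : Fin n), fderiv ℝ (fun y => F (L (x, y))) y (Pi.single i 1) =
        fderiv ℝ F (L (x, y)) (Pi.single i.succ 1) := by
      intro x y i
      have h1 : HasFDerivAt (fun y : Fin n → ℝ => (x, y)) (ContinuousLinearMap.inr ℝ ℝ (Fin n → ℝ)) y :=
        hasFDerivAt_prodMk_right x y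
      have h2 := (hdF (L (x, y))).hasFDerivAt.comp y
        ((L : (ℝ × (Fin n → ℝ)) →L[ℝ] (Fin (n + 1) → ℝ)).hasFDerivAt.comp y h1)
      have h3 : fderiv ℝ (fun y => F (L (x, y))) y = _ := h2.fderiv
      rw [h3, ← hLs i]
      rfl
    have hfi : ∀ i, Integrable (fun p => fderiv ℝ F (L p) (Pi.single i 1) ^ 2 / F (L p))
        ((μ 0).prod ν) := fun i => by
      refine integrable_of_abs_le (Continuous.measurable ?_) (M ^ 2 / ε) fun p => ?_
      · exact (((hpart _).comp hLc).pow 2).div (hFc.comp hLc) fun p => (hFpos _).ne'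
      · have h1 : fderiv ℝ F (L p) (Pi.single i 1) ^ 2 ≤ M ^ 2 :=
          sq_le_sq' (abs_le.1 (hF' _ i)).1 (abs_le.1 (hF' _ i)).2
        have h2 := (hF (L p)).1
        rw [abs_of_nonneg (by have := hFpos (L p); positivity)]
        gcongr
    obtain ⟨C, hC⟩ := exists_bound_mul_log M
    have hFabs : ∀ x, |F x| ≤ M := fun x => by rw [abs_of_pos (hFpos x)]; exact (hF x).2
    have hFm := hFc.measurable
    have i0 : Integrable (fun p => F (L p) * log (F (L p))) ((μ 0).prod ν) :=
      integrable_of_abs_le (by fun_prop) C fun p => hC _ (hFpos _).le (hF _).2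
    have hav : ∀ {α : Type} [MeasurableSpace α] (κ : Measure α) [IsProbabilityMeasure κ]
        (g : α → (Fin (n + 1) → ℝ)), Measurable g →
        0 ≤ ∫ a, F (g a) ∂κ ∧ ∫ a, F (g a) ∂κ ≤ M := fun κ _ g hg => by
      refine ⟨integral_nonneg fun a => (hFpos _).le, ?_⟩
      have hi : Integrable (fun a => F (g a)) κ :=
        integrable_of_abs_le (by fun_prop) M fun a => hFabs _
      simpa using integral_mono hi (integrable_const M) fun a => (hF (g a)).2
    have hFLm : Measurable fun p => F (L p) := by fun_prop
    have hsub := entropy_prod_le (μ := μ 0) (ν := ν) (F := fun p => F (L p)) hFLm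
      hε fun p => hF (L p)
    have b1 : ∫ y, (∫ x, F (L (x, y)) * log (F (L (x, y))) ∂μ 0
        - (∫ x, F (L (x, y)) ∂μ 0) * log (∫ x, F (L (x, y)) ∂μ 0)) ∂ν ≤
        ∫ y, ((2 * t)⁻¹ * ∫ x, fderiv ℝ F (L (x, y)) (Pi.single 0 1) ^ 2 / F (L (x, y)) ∂μ 0) ∂ν := by
      refine integral_mono (i0.integral_prod_right.sub (integrable_of_abs_le ?_ C fun y => ?_))
        ((hfi 0).integral_prod_right.const_mul _) fun y => ?_
      · have : Measurable fun y => ∫ x, F (L (x, y)) ∂μ 0 :=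
          hFLm.stronglyMeasurable.integral_prod_left'.measurable
        fun_prop
      · have := hav (μ 0) (fun x => L (x, y)) (by fun_prop)
        exact hC _ this.1 this.2
      · refine hμ 0 (fun x => F (L (x, y))) (fun x => fderiv ℝ F (L (x, y)) (Pi.single 0 1)) ε M hε
          (fun x => hF _) (fun x => ?_) ((hpart _).comp (by fun_prop)) (fun x => hF' _ _)
        exact (hdF _).hasFDerivAt.comp_hasDerivAt x (hL0 y x)
    have b2 : ∫ x, (∫ y, F (L (x, y)) * log (F (L (x, y))) ∂ν
        - (∫ y, F (L (x, y)) ∂ν) * log (∫ y, F (L (x, y)) ∂ν)) ∂μ 0 ≤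
        ∫ x, ((2 * t)⁻¹ * ∫ y, ∑ i : Fin n,
          fderiv ℝ F (L (x, y)) (Pi.single i.succ 1) ^ 2 / F (L (x, y)) ∂ν) ∂μ 0 := by
      refine integral_mono (i0.integral_prod_left.sub (integrable_of_abs_le ?_ C fun x => ?_))
        ((integrable_finsetSum _ fun i _ => hfi (Fin.succ i)).integral_prod_left.const_mul _)
        fun x => ?_
      · have : Measurable fun x => ∫ y, F (L (x, y)) ∂ν :=
          hFLm.stronglyMeasurable.integral_prod_right'.measurable
        fun_prop
      · have := hav ν (fun y => L (x, y)) (by fun_prop)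
        exact hC _ this.1 this.2
      · have := ih (fun i => μ i.succ) (fun i => hμ i.succ) (F := fun y => F (L (x, y)))
          (fun y => hF _) (hFd.comp (L.contDiff.comp (contDiff_prodMk_right x)))
          (fun y i => by rw [hsd]; exact hF' _ _)
        simpa only [hsd] using this
    rw [hint, hint, hint]
    refine hsub.trans ((add_le_add b1 b2).trans_eq ?_)
    rw [integral_const_mul, integral_const_mul, ← mul_add, ← integral_prod_symm _ (hfi 0),
      ← integral_prod _ (integrable_finsetSum _ fun i _ => hfi (Fin.succ i)),
      ← integral_add (hfi 0) (integrable_finsetSum _ fun i _ => hfi (Fin.succ i))]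
    simp only [Fin.sum_univ_succ]

end Tensorization

section Gaussian
open Set Topology

variable {n : ℕ} {A : Fin n → ℝ} {t : ℝ}

/-- The positivity region in coordinates. -/
def piRegion (A : Fin n → ℝ) : Set (Fin n → ℝ) := univ.pi fun i => monInterval (A i)

/-- The monomial weight in coordinates. -/
def piWeight (A : Fin n → ℝ) (x : Fin n → ℝ) : ℝ := ∏ i, |x i| ^ A i

lemma measurableSet_piRegion : MeasurableSet (piRegion A) :=
  MeasurableSet.univ_pi fun i => measurableSet_monInterval (A i)

lemma continuous_piWeight (hA : ∀ i, 0 ≤ A i) : Continuous (piWeight A) :=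
  continuous_finsetProd _ fun i _ =>
    (continuous_abs.comp (continuous_apply i)).rpow_const fun _ => Or.inr (hA i)

lemma piWeight_nonneg (x : Fin n → ℝ) : 0 ≤ piWeight A x := by
  unfold piWeight
  positivity

lemma prod_gaussWeight (x : Fin n → ℝ) :
    ∏ i, gaussWeight (A i) t (x i) = piWeight A x * exp (-(t / 2) * ∑ i, x i ^ 2) := by
  simp only [gaussWeight, piWeight, Finset.prod_mul_distrib, Finset.mul_sum, exp_sum]

lemma pi_gaussMeasure_eq (hA : ∀ i, 0 ≤ A i) (ht : 0 < t) :
    Measure.pi (fun i => gaussMeasure (A i) t) =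
      (volume.restrict (piRegion A)).withDensity fun x =>
        ENNReal.ofReal (∏ i, ((gaussMass (A i) t)⁻¹ * gaussWeight (A i) t (x i))) := by
  have hprob := fun i => isProbabilityMeasure_gaussMeasure (hA i) ht
  have hnn : ∀ i x, 0 ≤ (gaussMass (A i) t)⁻¹ * gaussWeight (A i) t x := fun i x =>
    mul_nonneg (inv_nonneg.2 (gaussMass_pos (hA i) ht).le) (gaussWeight_nonneg x)
  refine Measure.pi_eq fun s hs => ?_
  have hint : ∀ i, Integrable ((s i).indicator fun x =>
      (gaussMass (A i) t)⁻¹ * gaussWeight (A i) t x) (volume.restrict (monInterval (A i))) :=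
    fun i => (((integrableOn_gaussWeight (hA i) ht).const_mul _)).indicator (hs i)
  have h1 : ∀ i, gaussMeasure (A i) t (s i) = ENNReal.ofReal (∫ x in monInterval (A i),
      (s i).indicator (fun x => (gaussMass (A i) t)⁻¹ * gaussWeight (A i) t x) x) := fun i => by
    rw [ofReal_integral_eq_lintegral_ofReal (hint i)
      (ae_of_all _ fun x => indicator_nonneg (fun x _ => hnn i x) x), gaussMeasure,
      withDensity_apply _ (hs i), ← lintegral_indicator (hs i)]
    refine lintegral_congr fun x => ?_
    by_cases hx : x ∈ s i <;> simp [hx]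
  simp only [h1]
  rw [← ENNReal.ofReal_prod_of_nonneg
    (fun i _ => integral_nonneg fun x => indicator_nonneg (fun x _ => hnn i x) x),
    ← integral_fintype_prod_eq_prod (fun i => (s i).indicator
      fun x => (gaussMass (A i) t)⁻¹ * gaussWeight (A i) t x),
    ofReal_integral_eq_lintegral_ofReal (Integrable.fintype_prod hint)
      (ae_of_all _ fun x => Finset.prod_nonneg fun i _ => indicator_nonneg (fun x _ => hnn i x) _),
    withDensity_apply _ (MeasurableSet.univ_pi hs), ← lintegral_indicator (MeasurableSet.univ_pi hs),
    piRegion, volume_pi, Measure.restrict_pi_pi]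
  refine lintegral_congr fun x => ?_
  by_cases hx : x ∈ univ.pi s
  · rw [indicator_of_mem hx]
    congr 1
    exact Finset.prod_congr rfl fun i _ => (indicator_of_mem (hx i (mem_univ i))
      fun x => (gaussMass (A i) t)⁻¹ * gaussWeight (A i) t x).symm
  · rw [indicator_of_notMem hx]
    simp only [mem_univ_pi, not_forall] at hx
    obtain ⟨i, hi⟩ := hx
    rw [Finset.prod_eq_zero (Finset.mem_univ i) (indicator_of_notMem hi _), ENNReal.ofReal_zero]

lemma integral_pi_gaussMeasure (hA : ∀ i, 0 ≤ A i) (ht : 0 < t) (h : (Fin n → ℝ) → ℝ) :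
    ∫ x, h x ∂Measure.pi (fun i => gaussMeasure (A i) t) =
      ∫ x in piRegion A, h x * ((∏ i, gaussMass (A i) t)⁻¹ *
        (piWeight A x * exp (-(t / 2) * ∑ i, x i ^ 2))) := by
  have hnn : ∀ i x, 0 ≤ (gaussMass (A i) t)⁻¹ * gaussWeight (A i) t x := fun i x =>
    mul_nonneg (inv_nonneg.2 (gaussMass_pos (hA i) ht).le) (gaussWeight_nonneg x)
  have hm : ∀ i, Measurable (gaussWeight (A i) t) := fun i => measurable_gaussWeight
  rw [pi_gaussMeasure_eq hA ht, integral_withDensity_eq_integral_toReal_smul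
    (by fun_prop) (ae_of_all _ fun x => ENNReal.ofReal_lt_top)]
  refine integral_congr_ae (ae_of_all _ fun x => ?_)
  simp only [smul_eq_mul]
  rw [ENNReal.toReal_ofReal (Finset.prod_nonneg fun i _ => hnn i _), mul_comm,
    Finset.prod_mul_distrib, prod_gaussWeight, Finset.prod_inv_distrib]

/-- The logarithmic Sobolev inequality for the product measure, for compactly supported functions. -/
lemma logSobolev_pi_gaussMeasure (hA : ∀ i, 0 ≤ A i) (ht : 0 < t) {g : (Fin n → ℝ) → ℝ}
    (hg : ContDiff ℝ 1 g) (hs : HasCompactSupport g) :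
    ∫ x, g x ^ 2 * log (g x ^ 2) ∂Measure.pi (fun i => gaussMeasure (A i) t)
      - (∫ x, g x ^ 2 ∂Measure.pi (fun i => gaussMeasure (A i) t))
        * log (∫ x, g x ^ 2 ∂Measure.pi (fun i => gaussMeasure (A i) t)) ≤
    2 / t * ∫ x, ∑ i, fderiv ℝ g x (Pi.single i 1) ^ 2
      ∂Measure.pi (fun i => gaussMeasure (A i) t) := by
  have hprob := fun i => isProbabilityMeasure_gaussMeasure (hA i) ht
  set γ := Measure.pi fun i => gaussMeasure (A i) t
  have hgc : Continuous g := hg.continuous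
  have hgm : Measurable g := hgc.measurable
  have hdg : Differentiable ℝ g := hg.differentiable (by norm_num)
  have hpart : ∀ v, Continuous fun x => fderiv ℝ g x v := fun v =>
    (hg.continuous_fderiv (by norm_num)).clm_apply continuous_const
  obtain ⟨B, hB⟩ := hgc.bounded_above_of_compact_support hs
  obtain ⟨B', hB'⟩ := (hg.continuous_fderiv (by norm_num)).bounded_above_of_compact_support
    (hs.fderiv (𝕜 := ℝ))
  have hB0 : 0 ≤ B := (norm_nonneg _).trans (hB 0)
  have hB0' : 0 ≤ B' := (norm_nonneg _).trans (hB' 0)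
  have hsq : ∀ x, g x ^ 2 ≤ B ^ 2 := fun x => sq_le_sq' (abs_le.1 (hB x)).1 (abs_le.1 (hB x)).2
  have hpb : ∀ x i, |fderiv ℝ g x (Pi.single i 1)| ≤ B' := fun x i => by
    refine ((fderiv ℝ g x).le_opNorm _).trans ?_
    have : ‖(Pi.single i 1 : Fin n → ℝ)‖ ≤ 1 := by
      rw [Pi.norm_single]; simp
    calc _ ≤ B' * 1 := mul_le_mul (hB' x) this (norm_nonneg _) hB0'
      _ = B' := mul_one _
  have hgi : Integrable (fun x => g x ^ 2) γ :=
    integrable_of_abs_le (by fun_prop) (B ^ 2) fun x => by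
      rw [abs_of_nonneg (sq_nonneg _)]; exact hsq x
  have hei : ∀ i, Integrable (fun x => fderiv ℝ g x (Pi.single i 1) ^ 2) γ := fun i =>
    integrable_of_abs_le ((hpart _).pow 2).measurable (B' ^ 2) fun x => by
      rw [abs_of_nonneg (sq_nonneg _)]
      exact sq_le_sq' (abs_le.1 (hpb x i)).1 (abs_le.1 (hpb x i)).2
  have main : ∀ ε : ℝ, 0 < ε → ∫ x, (g x ^ 2 + ε) * log (g x ^ 2 + ε) ∂γ
      - (∫ x, g x ^ 2 ∂γ + ε) * log (∫ x, g x ^ 2 ∂γ + ε) ≤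
      2 / t * ∫ x, ∑ i, fderiv ℝ g x (Pi.single i 1) ^ 2 ∂γ := by
    intro ε hε
    have hder : ∀ x v, fderiv ℝ (fun x => g x ^ 2 + ε) x v = 2 * g x * fderiv ℝ g x v := by
      intro x v
      have h1 := ((hdg x).hasFDerivAt.pow 2).add_const ε
      rw [h1.fderiv]
      simp
    have h := logSobolev_pi (t := t) (fun i => gaussMeasure (A i) t)
      (fun i => hasLogSobolev_gaussMeasure (hA i) ht) (F := fun x => g x ^ 2 + ε)
      (ε := ε) (M := B ^ 2 + ε + 2 * B * B') hε
      (fun x => ⟨by have := sq_nonneg (g x); linarith, by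
        have := hsq x; have : 0 ≤ 2 * B * B' := by positivity
        linarith⟩) ((hg.pow 2).add contDiff_const) (fun x i => by
        rw [hder, abs_mul, abs_mul, abs_two]
        have h1 := hB x
        have h2 := hpb x i
        rw [Real.norm_eq_abs] at h1
        have : 2 * |g x| * |fderiv ℝ g x (Pi.single i 1)| ≤ 2 * B * B' := by gcongr
        have := sq_nonneg B
        linarith)
    have hm : ∫ x, (g x ^ 2 + ε) ∂γ = ∫ x, g x ^ 2 ∂γ + ε := by
      rw [integral_add hgi (integrable_const _)]; simp
    change ∫ x, (g x ^ 2 + ε) * log (g x ^ 2 + ε) ∂γ - (∫ x, (g x ^ 2 + ε) ∂γ) *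
      log (∫ x, (g x ^ 2 + ε) ∂γ) ≤ _ at h
    rw [hm] at h
    refine h.trans ?_
    rw [← integral_const_mul, ← integral_const_mul]
    refine integral_mono_of_nonneg (ae_of_all _ fun x => ?_)
      ((integrable_finsetSum _ fun i _ => hei i).const_mul _) (ae_of_all _ fun x => ?_)
    · have : 0 < g x ^ 2 + ε := by positivity
      exact mul_nonneg (by positivity) (Finset.sum_nonneg fun i _ => by positivity)
    · simp only [Finset.mul_sum]
      refine Finset.sum_le_sum fun i _ => ?_
      rw [hder]
      have hp : 0 < g x ^ 2 + ε := by positivity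
      set d := fderiv ℝ g x (Pi.single i 1)
      have : (2 * g x * d) ^ 2 / (g x ^ 2 + ε) ≤ 4 * d ^ 2 := by
        rw [div_le_iff₀ hp]
        nlinarith [mul_nonneg (sq_nonneg d) hε.le]
      calc _ ≤ (2 * t)⁻¹ * (4 * d ^ 2) := by gcongr
        _ = _ := by field_simp; norm_num
  have hε : Tendsto (fun k : ℕ => 1 / ((k : ℝ) + 1)) atTop (𝓝 0) :=
    tendsto_one_div_add_atTop_nhds_zero_nat
  obtain ⟨C, hC⟩ := exists_bound_mul_log (B ^ 2 + 1)
  have l1 : Tendsto (fun k : ℕ => ∫ x, (g x ^ 2 + 1 / ((k : ℝ) + 1)) *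
      log (g x ^ 2 + 1 / ((k : ℝ) + 1)) ∂γ) atTop (𝓝 (∫ x, g x ^ 2 * log (g x ^ 2) ∂γ)) := by
    refine tendsto_integral_of_dominated_convergence (fun _ => C) (fun k => ?_)
      (integrable_const C) (fun k => ae_of_all _ fun x => ?_) (ae_of_all _ fun x => ?_)
    · exact Measurable.aestronglyMeasurable (by fun_prop)
    · have h1 : 1 / ((k : ℝ) + 1) ≤ 1 := by
        rw [div_le_one (by positivity)]
        linarith [(Nat.cast_nonneg k : (0 : ℝ) ≤ k)]
      exact hC _ (by positivity) (by linarith [hsq x])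
    · have := (continuous_mul_log.tendsto (g x ^ 2 + 0)).comp (hε.const_add (g x ^ 2))
      rw [add_zero] at this
      exact this
  have l2 := (continuous_mul_log.tendsto (∫ x, g x ^ 2 ∂γ + 0)).comp
    (hε.const_add (∫ x, g x ^ 2 ∂γ))
  rw [add_zero] at l2
  exact le_of_tendsto' (l1.sub l2) fun k => main _ (by positivity)

lemma setIntegral_piRegion_comp_smul {R : ℝ} (hR : 0 < R) (h : (Fin n → ℝ) → ℝ) :
    ∫ x in piRegion A, h (R • x) * piWeight A x =
      R ^ (-((n : ℝ) + ∑ i, A i)) * ∫ x in piRegion A, h x * piWeight A x := by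
  have hmem : ∀ x, R • x ∈ piRegion A ↔ x ∈ piRegion A := fun x => by
    simp [piRegion, monInterval, hR]
  have hw : ∀ x, piWeight A (R • x) = R ^ (∑ i, A i) * piWeight A x := fun x => by
    simp only [piWeight, Pi.smul_apply, smul_eq_mul, abs_mul, abs_of_pos hR]
    rw [rpow_sum_of_pos hR, ← Finset.prod_mul_distrib]
    exact Finset.prod_congr rfl fun i _ => mul_rpow hR.le (abs_nonneg _)
  have h1 := Measure.integral_comp_smul_of_nonneg volume
    ((piRegion A).indicator fun x => h x * piWeight A x) R (hR := hR.le)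
  have h2 : ∀ x, (piRegion A).indicator (fun x => h x * piWeight A x) (R • x) =
      R ^ (∑ i, A i) * (piRegion A).indicator (fun x => h (R • x) * piWeight A x) x := fun x => by
    by_cases hx : x ∈ piRegion A
    · rw [indicator_of_mem hx, indicator_of_mem ((hmem x).2 hx), hw]
      ring
    · rw [indicator_of_notMem hx, indicator_of_notMem (fun h => hx ((hmem x).1 h)), mul_zero]
  simp only [h2] at h1
  rw [integral_const_mul, integral_indicator measurableSet_piRegion,
    integral_indicator measurableSet_piRegion, Module.finrank_fin_fun, smul_eq_mul] at h1
  have hpos : 0 < R ^ (∑ i, A i) := rpow_pos_of_pos hR _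
  have h3 : R ^ (-((n : ℝ) + ∑ i, A i)) = (R ^ (∑ i, A i))⁻¹ * (R ^ n)⁻¹ := by
    rw [rpow_neg hR.le, rpow_add hR, rpow_natCast, mul_inv, mul_comm]
  rw [h3, mul_assoc, ← h1, inv_mul_cancel_left₀ hpos.ne']

/-- Integration by parts against the Euler vector field. -/
lemma setIntegral_fderiv_self_mul_piWeight (hA : ∀ i, 0 ≤ A i) {h : (Fin n → ℝ) → ℝ}
    (hh : ContDiff ℝ 1 h) (hs : HasCompactSupport h) :
    ∫ x in piRegion A, fderiv ℝ h x x * piWeight A x =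
      -((n : ℝ) + ∑ i, A i) * ∫ x in piRegion A, h x * piWeight A x := by
  set D := (n : ℝ) + ∑ i, A i
  set J := ∫ x in piRegion A, h x * piWeight A x with hJ
  have hc := hh.continuous
  have hw := continuous_piWeight hA
  have hdh : Differentiable ℝ h := hh.differentiable (by norm_num)
  have hfc : Continuous (fderiv ℝ h) := hh.continuous_fderiv (by norm_num)
  obtain ⟨C, hC⟩ := hfc.bounded_above_of_compact_support (hs.fderiv (𝕜 := ℝ))
  have hC0 : 0 ≤ C := (norm_nonneg _).trans (hC 0)
  obtain ⟨r, hr⟩ := (hs.fderiv (𝕜 := ℝ)).isBounded.subset_closedBall 0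
  have hd1 : HasDerivAt (fun R : ℝ => ∫ x in piRegion A, h (R • x) * piWeight A x)
      (∫ x in piRegion A, fderiv ℝ h ((1 : ℝ) • x) x * piWeight A x) 1 := by
    refine (hasDerivAt_integral_of_dominated_loc_of_deriv_le
      (F := fun (R : ℝ) x => h (R • x) * piWeight A x)
      (F' := fun (R : ℝ) x => fderiv ℝ h (R • x) x * piWeight A x)
      (bound := (Metric.closedBall 0 (2 * r)).indicator fun x => C * ‖x‖ * piWeight A x)
      (Ioo_mem_nhds (show (1 / 2 : ℝ) < 1 by norm_num) (show (1 : ℝ) < 2 by norm_num))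
      (Eventually.of_forall fun R => Continuous.aestronglyMeasurable (by fun_prop))
      ?_ (Continuous.aestronglyMeasurable ?_) (ae_of_all _ fun x R hR => ?_) ?_
      (ae_of_all _ fun x R hR => ?_)).2
    · simp only [one_smul]
      exact ((hc.mul hw).integrable_of_hasCompactSupport hs.mul_right).integrableOn
    · exact (((hfc.comp (continuous_const_smul (1 : ℝ))).clm_apply continuous_id).mul hw)
    · by_cases hx : x ∈ Metric.closedBall (0 : Fin n → ℝ) (2 * r)
      · rw [indicator_of_mem hx, norm_mul, Real.norm_of_nonneg (piWeight_nonneg x)]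
        refine mul_le_mul_of_nonneg_right ?_ (piWeight_nonneg x)
        exact ((fderiv ℝ h (R • x)).le_opNorm x).trans (by gcongr; exact hC _)
      · have h0 : fderiv ℝ h (R • x) = 0 := by
          refine image_eq_zero_of_notMem_tsupport fun hmem => hx ?_
          have h1 := hr hmem
          rw [mem_closedBall_zero_iff, norm_smul, Real.norm_of_nonneg (by linarith [hR.1])] at h1
          rw [mem_closedBall_zero_iff]
          nlinarith [hR.1, norm_nonneg x]
        rw [indicator_of_notMem hx, h0]
        simp
    · refine Integrable.integrableOn ((integrable_indicator_iff measurableSet_closedBall).2 ?_)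
      exact ((continuous_const.mul continuous_norm).mul hw).continuousOn.integrableOn_compact
        (isCompact_closedBall _ _)
    · refine HasDerivAt.mul_const ?_ _
      have h1 : HasDerivAt (fun R : ℝ => R • x) x R := by
        simpa using (hasDerivAt_id R).smul_const x
      exact (hdh _).hasFDerivAt.comp_hasDerivAt R h1
  have hd2 : HasDerivAt (fun R : ℝ => R ^ (-D) * J) (-D * J) 1 := by
    have := (hasDerivAt_rpow_const (x := (1 : ℝ)) (p := -D) (Or.inl one_ne_zero)).mul_const J
    simpa using this
  have hev : (fun R : ℝ => ∫ x in piRegion A, h (R • x) * piWeight A x) =ᶠ[𝓝 1]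
      fun R => R ^ (-D) * J := by
    filter_upwards [lt_mem_nhds (zero_lt_one (α := ℝ))] with R hR
    exact setIntegral_piRegion_comp_smul hR h
  have := hd1.unique (hd2.congr_of_eventuallyEq hev)
  simpa using this

end Gaussian

section
open Set Topology
variable {n : ℕ} {A : Fin n → ℝ} {t : ℝ}

lemma logSobolev_piRegion_gaussMass (hA : ∀ i, 0 ≤ A i) (ht : 0 < t) {f : (Fin n → ℝ) → ℝ}
    (hf : ContDiff ℝ 1 f) (hs : HasCompactSupport f)
    (hnorm : ∫ x in piRegion A, f x ^ 2 * piWeight A x = 1) :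
    ∫ x in piRegion A, f x ^ 2 * log (f x ^ 2) * piWeight A x ≤
      2 / t * (∫ x in piRegion A, (∑ i, fderiv ℝ f x (Pi.single i 1) ^ 2) * piWeight A x)
        - ((n : ℝ) + ∑ i, A i) - log (∏ i, gaussMass (A i) t) := by
  have hW := continuous_piWeight hA
  set Z := ∏ i, gaussMass (A i) t with hZdef
  have hZ : 0 < Z := Finset.prod_pos fun i _ => gaussMass_pos (hA i) ht
  have hfc := hf.continuous
  have hfd := hf.continuous_fderiv one_ne_zero
  have hdiff := hf.differentiable one_ne_zero
  let q : (Fin n → ℝ) → ℝ := fun x => ∑ i, x i ^ 2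
  have hq : ContDiff ℝ 1 q := by fun_prop
  have hqc := hq.continuous
  let e : (Fin n → ℝ) → ℝ := fun x => √Z * exp (t / 4 * q x)
  have he : ContDiff ℝ 1 e := by fun_prop
  have he2 : ∀ x, e x ^ 2 = Z * exp (t / 2 * q x) := fun x => by
    simp only [e]
    rw [mul_pow, sq_sqrt hZ.le, ← exp_nat_mul]
    congr 2
    push_cast
    ring
  have hdens : ∀ x, e x ^ 2 * (Z⁻¹ * (piWeight A x * exp (-(t / 2) * q x))) = piWeight A x := by
    intro x
    rw [he2]
    have : exp (t / 2 * q x) * exp (-(t / 2) * q x) = 1 := by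
      rw [← exp_add]; simp
    calc _ = Z * Z⁻¹ * (exp (t / 2 * q x) * exp (-(t / 2) * q x)) * piWeight A x := by ring
      _ = _ := by rw [this, mul_inv_cancel₀ hZ.ne']; ring
  have hder : ∀ x i, fderiv ℝ (fun x => f x * e x) x (Pi.single i 1) =
      e x * (fderiv ℝ f x (Pi.single i 1) + t / 2 * x i * f x) := by
    intro x i
    have hqd : HasFDerivAt q 
        (∑ i, (2 * x i) • ContinuousLinearMap.proj (R := ℝ) (φ := fun _ : Fin n => ℝ) i) x := by
      refine HasFDerivAt.fun_sum fun i _ => ?_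
      have := (hasFDerivAt_apply (𝕜 := ℝ) i x).pow 2
      simpa using this
    have hed := ((hqd.const_mul (t / 4)).exp).const_mul (√Z)
    have := ((hdiff x).hasFDerivAt.mul hed).fderiv
    change fderiv ℝ (fun x => f x * e x) x = _ at this
    rw [this]
    simp [Pi.single_apply, e]
    ring
  have hmain := logSobolev_pi_gaussMeasure hA ht (g := fun x => f x * e x) (hf.mul he) hs.mul_right
  simp only [integral_pi_gaussMeasure hA ht, hder] at hmain
  have h1 : ∀ x, (f x * e x) ^ 2 * (Z⁻¹ * (piWeight A x * exp (-(t / 2) * q x))) =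
      f x ^ 2 * piWeight A x := fun x => by
    rw [mul_pow, mul_assoc, hdens]
  have h2 : ∀ x, (f x * e x) ^ 2 * log ((f x * e x) ^ 2) *
      (Z⁻¹ * (piWeight A x * exp (-(t / 2) * q x))) =
      f x ^ 2 * log (f x ^ 2) * piWeight A x + log Z * (f x ^ 2 * piWeight A x)
        + t / 2 * (q x * f x ^ 2 * piWeight A x) := fun x => by
    rw [mul_right_comm, h1]
    by_cases h0 : f x = 0
    · simp [h0]
    · rw [mul_pow, log_mul (by positivity) (by rw [he2]; positivity), he2,
        log_mul hZ.ne' (exp_pos _).ne', log_exp]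
      ring
  have hsum : ∀ x, fderiv ℝ f x x = ∑ i, x i * fderiv ℝ f x (Pi.single i 1) := fun x => by
    have := congrArg (fderiv ℝ f x) (pi_eq_sum_univ' x)
    rw [map_sum] at this
    simpa using this
  have h3 : ∀ x, (∑ i, (e x * (fderiv ℝ f x (Pi.single i 1) + t / 2 * x i * f x)) ^ 2) *
      (Z⁻¹ * (piWeight A x * exp (-(t / 2) * q x))) =
      (∑ i, fderiv ℝ f x (Pi.single i 1) ^ 2) * piWeight A x +
        t / 2 * (fderiv ℝ (fun x => f x ^ 2) x x * piWeight A x) +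
        t ^ 2 / 4 * (q x * f x ^ 2 * piWeight A x) := fun x => by
    have hsq : fderiv ℝ (fun x => f x ^ 2) x x = 2 * f x * fderiv ℝ f x x := by
      rw [fderiv_fun_pow 2 (hdiff x)]
      simp
    simp only [mul_pow (e x), ← Finset.mul_sum]
    rw [mul_right_comm, hdens, hsq, hsum, Finset.mul_sum, Finset.mul_sum]
    simp only [q, Finset.sum_mul, Finset.mul_sum, ← Finset.sum_add_distrib]
    refine Finset.sum_congr rfl fun i _ => ?_
    ring
  have hI : ∀ {h : (Fin n → ℝ) → ℝ}, Continuous h → (∀ x, x ∉ tsupport f → h x = 0) →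
      IntegrableOn (fun x => h x * piWeight A x) (piRegion A) := fun hc h0 =>
    ((hc.mul hW).integrable_of_hasCompactSupport
      ((HasCompactSupport.intro hs h0).mul_right)).integrableOn
  have hz : ∀ x, x ∉ tsupport f → f x = 0 := fun x => image_eq_zero_of_notMem_tsupport
  have hzd : ∀ x, x ∉ tsupport f → fderiv ℝ f x = 0 := fun x hx =>
    image_eq_zero_of_notMem_tsupport fun h => hx (tsupport_fderiv_subset ℝ h)
  have i1 : IntegrableOn (fun x => f x ^ 2 * piWeight A x) (piRegion A) :=
    hI (by fun_prop) fun x hx => by simp [hz x hx]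
  have i2 : IntegrableOn (fun x => f x ^ 2 * log (f x ^ 2) * piWeight A x) (piRegion A) :=
    hI (continuous_mul_log.comp (hfc.pow 2)) fun x hx => by simp [hz x hx]
  have i3 : IntegrableOn (fun x => q x * f x ^ 2 * piWeight A x) (piRegion A) :=
    hI (by fun_prop) fun x hx => by simp [hz x hx]
  have i4 : IntegrableOn (fun x => (∑ i, fderiv ℝ f x (Pi.single i 1) ^ 2) * piWeight A x)
      (piRegion A) :=
    hI (by fun_prop) fun x hx => by simp [hzd x hx]
  have hf2 : ContDiff ℝ 1 fun x => f x ^ 2 := hf.pow 2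
  have hs2 : HasCompactSupport fun x => f x ^ 2 :=
    HasCompactSupport.intro hs fun x hx => by simp [hz x hx]
  have i5 : IntegrableOn (fun x => fderiv ℝ (fun x => f x ^ 2) x x * piWeight A x)
      (piRegion A) := by
    refine hI ((hf2.continuous_fderiv one_ne_zero).clm_apply continuous_id) fun x hx => ?_
    rw [fderiv_fun_pow 2 (hdiff x)]
    simp [hz x hx]
  have hibp := setIntegral_fderiv_self_mul_piWeight hA hf2 hs2
  change (∫ x in piRegion A, (f x * e x) ^ 2 * log ((f x * e x) ^ 2) *
      (Z⁻¹ * (piWeight A x * exp (-(t / 2) * q x)))) -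
    (∫ x in piRegion A, (f x * e x) ^ 2 * (Z⁻¹ * (piWeight A x * exp (-(t / 2) * q x)))) *
      log (∫ x in piRegion A, (f x * e x) ^ 2 *
        (Z⁻¹ * (piWeight A x * exp (-(t / 2) * q x)))) ≤
    2 / t * ∫ x in piRegion A,
      (∑ i, (e x * (fderiv ℝ f x (Pi.single i 1) + t / 2 * x i * f x)) ^ 2) *
      (Z⁻¹ * (piWeight A x * exp (-(t / 2) * q x))) at hmain
  simp only [h1, h2, h3, hnorm, log_one, mul_zero, sub_zero] at hmain
  have hlin : ∀ {u v w : (Fin n → ℝ) → ℝ}, IntegrableOn u (piRegion A) →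
      IntegrableOn v (piRegion A) → IntegrableOn w (piRegion A) → ∀ a b : ℝ,
      ∫ x in piRegion A, u x + a * v x + b * w x = (∫ x in piRegion A, u x) +
        a * (∫ x in piRegion A, v x) + b * ∫ x in piRegion A, w x := fun hu hv hw a b =>
    (integral_add (hu.add (hv.const_mul a)) (hw.const_mul b)).trans (by
      rw [integral_add' hu (hv.const_mul a), integral_const_mul, integral_const_mul])
  rw [hlin i2 i1 i3, hlin i4 i5 i3, hibp, hnorm] at hmain
  set Q := ∫ x in piRegion A, q x * f x ^ 2 * piWeight A x
  set E := ∫ x in piRegion A, (∑ i, fderiv ℝ f x (Pi.single i 1) ^ 2) * piWeight A x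
  set D := (n : ℝ) + ∑ i, A i
  have : 2 / t * (E + t / 2 * (-D * 1) + t ^ 2 / 4 * Q) = 2 / t * E - D + t / 2 * Q := by
    field_simp
    ring
  linarith

lemma gaussMass_eq {a : ℝ} (ha : 0 ≤ a) (ht : 0 < t) :
    gaussMass a t = (t / 2) ^ (-(a + 1) / 2) * (Gamma ((a + 1) / 2) / if 0 < a then 2 else 1) := by
  rcases ha.eq_or_lt with rfl | ha
  · simp only [gaussMass, monInterval_zero, Measure.restrict_univ, gaussWeight, rpow_zero, one_mul]
    rw [integral_gaussian, if_neg (lt_irrefl _), div_one, zero_add, Gamma_one_half_eq, neg_div,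
      rpow_neg (by positivity), ← sqrt_eq_rpow, sqrt_div pi_pos.le]
    ring
  · have h := integral_rpow_mul_exp_neg_mul_rpow (p := 2) (q := a) (b := t / 2) two_pos
      (by linarith) (by positivity)
    rw [gaussMass, monInterval_of_pos ha, if_pos ha]
    calc _ = ∫ x in Ioi (0 : ℝ), x ^ a * exp (-(t / 2) * x ^ (2 : ℝ)) :=
          setIntegral_congr_fun measurableSet_Ioi fun x hx => by
            simp only [gaussWeight, abs_of_pos (mem_Ioi.1 hx), rpow_two]
      _ = _ := by rw [h]; ring

lemma prod_ite_pos_eq : ∏ i, (if 0 < A i then (2 : ℝ) else 1) = 2 ^ monK A := by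
  rw [Finset.prod_ite, Finset.prod_const_one, mul_one, Finset.prod_const, monK,
    Nat.card_eq_fintype_card, Fintype.card_subtype]

lemma monDim_pos (hn : 0 < n) (hA : ∀ i, 0 ≤ A i) : 0 < monDim A := by
  have h1 : 0 ≤ ∑ i, A i := Finset.sum_nonneg fun i _ => hA i
  have h2 : (0 : ℝ) < n := Nat.cast_pos.2 hn
  simp only [monDim, Fintype.card_fin]
  linarith

lemma prod_Gamma_div_pos (hA : ∀ i, 0 ≤ A i) : 0 < (∏ i, Gamma ((A i + 1) / 2)) / 2 ^ monK A :=
  div_pos (Finset.prod_pos fun i _ => Gamma_pos_of_pos (by linarith [hA i])) (by positivity)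

lemma log_prod_gaussMass (hn : 0 < n) (hA : ∀ i, 0 ≤ A i) (ht : 0 < t) :
    log (∏ i, gaussMass (A i) t) = monDim A / 2 * (log (monPi A) - log (t / 2)) := by
  have hD := monDim_pos hn hA
  have hP := prod_Gamma_div_pos hA
  have h : ∏ i, gaussMass (A i) t =
      (t / 2) ^ (-(monDim A / 2)) * ((∏ i, Gamma ((A i + 1) / 2)) / 2 ^ monK A) := by
    simp only [gaussMass_eq (hA _) ht, Finset.prod_mul_distrib, Finset.prod_div_distrib,
      prod_ite_pos_eq]
    rw [← rpow_sum_of_pos (by positivity)]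
    congr 2
    simp only [monDim, Fintype.card_fin, neg_div, Finset.sum_neg_distrib, ← Finset.sum_div,
      Finset.sum_add_distrib, Finset.sum_const, Finset.card_univ, nsmul_eq_mul, mul_one]
    ring
  rw [h, log_mul (rpow_pos_of_pos (by positivity) _).ne' hP.ne', log_rpow (by positivity), monPi,
    log_rpow hP]
  field_simp
  ring

/-- Optimising the one-parameter family of linear bounds gives the logarithmic bound. -/
lemma le_log_of_forall_le {S E D P : ℝ} (hE : 0 ≤ E) (hD : 0 < D) (hP : 0 < P)
    (h : ∀ t, 0 < t → S ≤ 2 / t * E - D - D / 2 * (log P - log (t / 2))) :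
    S ≤ D / 2 * log (2 / (P * exp 1 * D) * E) := by
  rcases hE.eq_or_lt with rfl | hE
  · exfalso
    have := h (2 * exp (2 / D * (S - 1) + 2 + log P)) (by positivity)
    rw [mul_div_cancel_left₀ _ two_ne_zero, log_exp] at this
    have h1 : D / 2 * (2 / D * (S - 1) + 2 + log P) = S - 1 + D + D / 2 * log P := by
      field_simp
    nlinarith
  · have := h (4 * E / D) (by positivity)
    have h1 : 4 * E / D / 2 = 2 * E / D := by ring
    have h2 : 2 / (4 * E / D) * E = D / 2 := by field_simp; norm_num
    have h3 : 2 / (P * exp 1 * D) * E = 2 * E / D / (P * exp 1) := by field_simp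
    rw [h1, h2] at this
    rw [h3, log_div (by positivity) (by positivity), log_mul hP.ne' (exp_pos 1).ne', log_exp]
    linarith

lemma setIntegral_monSet (h : EuclideanSpace ℝ (Fin n) → ℝ) :
    ∫ x in monSet A, h x = ∫ x in piRegion A, h (WithLp.toLp 2 x) := by
  have hpre : (WithLp.toLp 2) ⁻¹' monSet A = piRegion A := by
    ext x
    simp [monSet, piRegion, monInterval]
  rw [← (PiLp.volume_preserving_toLp (Fin n)).setIntegral_preimage_emb
    (MeasurableEquiv.toLp 2 (Fin n → ℝ)).measurableEmbedding, hpre]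

lemma norm_sq_fderiv_toLp {f : EuclideanSpace ℝ (Fin n) → ℝ} (hf : Differentiable ℝ f)
    (x : Fin n → ℝ) : ‖fderiv ℝ f (WithLp.toLp 2 x)‖ ^ 2 =
      ∑ i, fderiv ℝ (fun y : Fin n → ℝ => f (WithLp.toLp 2 y)) x (Pi.single i 1) ^ 2 := by
  set L := fderiv ℝ f (WithLp.toLp 2 x)
  let T := (PiLp.continuousLinearEquiv 2 ℝ fun _ : Fin n => ℝ).symm
  have hd : HasFDerivAt (fun y : Fin n → ℝ => f (WithLp.toLp 2 y))
      (L.comp (T : (Fin n → ℝ) →L[ℝ] EuclideanSpace ℝ (Fin n))) x :=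
    ((hf _).hasFDerivAt (x := WithLp.toLp 2 x)).comp x T.hasFDerivAt
  rw [hd.fderiv, ← (InnerProductSpace.toDual ℝ _).symm.norm_map L, EuclideanSpace.norm_sq_eq]
  refine Finset.sum_congr rfl fun i _ => ?_
  have : L (T (Pi.single i 1)) = (InnerProductSpace.toDual ℝ _).symm L i := by
    rw [← InnerProductSpace.toDual_symm_apply (𝕜 := ℝ)]
    change inner ℝ ((InnerProductSpace.toDual ℝ _).symm L) (EuclideanSpace.single i (1 : ℝ)) = _
    rw [EuclideanSpace.inner_single_right]
    simp
  simp [this]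

end

/-- the sharp logarithmic Sobolev inequality with monomial weights.
(Recall `Real.log 0 = 0`, so `|f|^2 log |f|^2` vanishes where `f = 0`.) -/
theorem logSobolev_monomial_weight {n : ℕ} (hn : 0 < n) (A : Fin n → ℝ) (hA : ∀ i, 0 ≤ A i)
    (f : EuclideanSpace ℝ (Fin n) → ℝ) (hf : ContDiff ℝ 1 f) (hsupp : HasCompactSupport f)
    (hnorm : ∫ x in monSet A, f x ^ 2 * monWeight A x = 1) :
    ∫ x in monSet A, f x ^ 2 * log (f x ^ 2) * monWeight A x ≤
      monDim A / 2 *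
        log (2 / (monPi A * exp 1 * monDim A) *
          ∫ x in monSet A, ‖fderiv ℝ f x‖ ^ 2 * monWeight A x) := by
  have hdiff := hf.differentiable one_ne_zero
  let T := (PiLp.continuousLinearEquiv 2 ℝ fun _ : Fin n => ℝ).symm
  have hfT : ContDiff ℝ 1 fun x : Fin n → ℝ => f (WithLp.toLp 2 x) := hf.comp T.contDiff
  have hsT : HasCompactSupport fun x : Fin n → ℝ => f (WithLp.toLp 2 x) :=
    hsupp.comp_homeomorph T.toHomeomorph
  refine le_log_of_forall_le
    (integral_nonneg fun x => mul_nonneg (sq_nonneg _)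
      (Finset.prod_nonneg fun i _ => rpow_nonneg (abs_nonneg _) _))
    (monDim_pos hn hA) (rpow_pos_of_pos (prod_Gamma_div_pos hA) _) fun t ht => ?_
  rw [setIntegral_monSet] at hnorm
  rw [← log_prod_gaussMass hn hA ht, setIntegral_monSet, setIntegral_monSet]
  simp only [norm_sq_fderiv_toLp hdiff]
  rw [monDim, Fintype.card_fin]
  exact logSobolev_piRegion_gaussMass hA ht hfT hsT hnorm
end
end

section
/- Let A = (A_1,…,A_n) be a nonnegative vector in ℝ^n, D = n + A_1 + ⋯ + A_n, and α > 0. Let f : ℝ^n → ℝ be measurable with ∫_{ℝ^n_A} |f| x^A dx = 1 and ∫_{ℝ^n_A} |f| |x|^α x^A dx < ∞, and assume |f| log|f| is integrable on ℝ^n_A with respect to x^A dx. Then −∫_{ℝ^n_A} |f| log|f| x^A dx ≤ (D/α) · log( (α C_A(α) e / D) ∫_{ℝ^n_A} |f| |x|^α x^A dx ), where C_A(α) = ( (Γ(D/α + 1)/Γ(D/2 + 1)) · Π(A)^{D/2} )^{α/D}. -/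
open MeasureTheory Real Filter

noncomputable section

/-- The constant `C_A(α) = ( (Γ(D/α+1)/Γ(D/2+1)) Π(A)^{D/2} )^{α/D}`. -/
def monCA {ι : Type*} [Fintype ι] (A : ι → ℝ) (α : ℝ) : ℝ :=
  (Gamma (monDim A / α + 1) / Gamma (monDim A / 2 + 1) * monPi A ^ (monDim A / 2)) ^
    (α / monDim A)

section NormPowers

variable {E : Type*} [NormedAddCommGroup E] [MeasurableSpace E] [OpensMeasurableSpace E]
  {μ : Measure E} {D p s : ℝ}

theorem hasDerivAt_neg_exp_neg_mul_rpow {t : ℝ} (ht : 0 < t) :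
    HasDerivAt (fun t => -exp (-s * t ^ p)) (s * p * (t ^ (p - 1) * exp (-s * t ^ p))) t := by
  have h := (((hasDerivAt_rpow_const (p := p) (Or.inl ht.ne')).const_mul (-s)).exp).neg
  convert! h using 1
  ring

theorem lintegral_Ioi_rpow_mul_exp_neg_mul_rpow (hp : 0 < p) (hs : 0 < s) {r : ℝ} (hr : 0 ≤ r) :
    ∫⁻ t in Set.Ioi r, ENNReal.ofReal (s * p * (t ^ (p - 1) * exp (-s * t ^ p))) =
      ENNReal.ofReal (exp (-s * r ^ p)) := by
  have hcont : ContinuousWithinAt (fun t => -exp (-s * t ^ p)) (Set.Ici r) r :=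
    (((continuous_id.rpow_const fun _ => Or.inr hp.le).const_mul (-s)).rexp.neg).continuousWithinAt
  have hderiv : ∀ t ∈ Set.Ioi r, HasDerivAt (fun t => -exp (-s * t ^ p))
      (s * p * (t ^ (p - 1) * exp (-s * t ^ p))) t := fun t ht =>
    hasDerivAt_neg_exp_neg_mul_rpow (hr.trans_lt ht)
  have hpos : ∀ t ∈ Set.Ioi r, 0 ≤ s * p * (t ^ (p - 1) * exp (-s * t ^ p)) := fun t ht => by
    have : 0 < t := hr.trans_lt ht
    positivity
  have hlim : Tendsto (fun t => -exp (-s * t ^ p)) atTop (nhds 0) := by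
    have h : Tendsto (fun t : ℝ => -s * t ^ p) atTop atBot :=
      (tendsto_rpow_atTop hp).const_mul_atTop_of_neg (neg_neg_of_pos hs)
    simpa using (tendsto_exp_atBot.comp h).neg
  rw [← ofReal_integral_eq_lintegral_ofReal
    (integrableOn_Ioi_deriv_of_nonneg hcont hderiv hpos hlim)
    ((ae_restrict_iff' measurableSet_Ioi).2 (Eventually.of_forall hpos)),
    integral_Ioi_of_hasDerivAt_of_nonneg hcont hderiv hpos hlim, zero_sub, neg_neg]

/-- The exponential integral of a power of the norm, for a measure whose balls grow like `t ^ D`. -/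
theorem lintegral_exp_neg_mul_norm_rpow [SFinite μ] {c : ENNReal} (hD : 0 < D)
    (hμ : ∀ t, 0 < t → μ (Metric.ball 0 t) = ENNReal.ofReal (t ^ D) * c)
    (hp : 0 < p) (hs : 0 < s) :
    ∫⁻ x, ENNReal.ofReal (exp (-s * ‖x‖ ^ p)) ∂μ =
      ENNReal.ofReal (s ^ (-(D / p)) * Gamma (D / p + 1)) * c := by
  set k : ℝ → ENNReal := fun t => ENNReal.ofReal (s * p * (t ^ (p - 1) * exp (-s * t ^ p)))
    with hk
  have hkm : Measurable k := by fun_prop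
  have hset : MeasurableSet {q : E × ℝ | ‖q.1‖ < q.2} :=
    measurableSet_lt (by fun_prop) (by fun_prop)
  calc ∫⁻ x, ENNReal.ofReal (exp (-s * ‖x‖ ^ p)) ∂μ
      = ∫⁻ x, (∫⁻ t in Set.Ioi (0 : ℝ),
          {q : E × ℝ | ‖q.1‖ < q.2}.indicator (fun q => k q.2) (x, t)) ∂μ := by
        refine lintegral_congr fun x => ?_
        rw [← lintegral_Ioi_rpow_mul_exp_neg_mul_rpow hp hs (norm_nonneg x),
          ← lintegral_indicator measurableSet_Ioi, ← lintegral_indicator measurableSet_Ioi]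
        refine lintegral_congr fun t => ?_
        by_cases h : ‖x‖ < t
        · have h0 : 0 < t := (norm_nonneg x).trans_lt h
          simp [h, h0, hk]
        · simp [h, Set.indicator]
    _ = ∫⁻ t in Set.Ioi (0 : ℝ),
          (∫⁻ x, {q : E × ℝ | ‖q.1‖ < q.2}.indicator (fun q => k q.2) (x, t) ∂μ) :=
        lintegral_lintegral_swap
          ((hkm.comp measurable_snd).indicator hset).aemeasurable
    _ = ∫⁻ t in Set.Ioi 0,
          ENNReal.ofReal (s * p * (t ^ (p - 1 + D) * exp (-s * t ^ p))) * c := by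
        refine setLIntegral_congr_fun measurableSet_Ioi fun t (ht : 0 < t) => ?_
        have h : ∀ x : E, {q : E × ℝ | ‖q.1‖ < q.2}.indicator (fun q => k q.2) (x, t) =
            (Metric.ball (0 : E) t).indicator (fun _ => k t) x := fun x => by
          simp [Set.indicator]
        simp only [h]
        rw [lintegral_indicator_const Metric.isOpen_ball.measurableSet, hμ t ht, ← mul_assoc, hk,
          ← ENNReal.ofReal_mul (by positivity), rpow_add ht]
        congr 2
        ring
    _ = _ := by
        have hint : IntegrableOn (fun t : ℝ => s * p * (t ^ (p - 1 + D) * exp (-s * t ^ p)))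
            (Set.Ioi 0) :=
          (integrableOn_rpow_mul_exp_neg_mul_rpow (by linarith) hp hs).const_mul _
        rw [lintegral_mul_const _ (by fun_prop), ← ofReal_integral_eq_lintegral_ofReal hint
          ((ae_restrict_iff' measurableSet_Ioi).2 (Eventually.of_forall fun t (ht : 0 < t) => by
            simp only [Pi.zero_apply]; positivity)), integral_const_mul,
          integral_rpow_mul_exp_neg_mul_rpow hp (by linarith) hs]
        congr 2
        have h1 : -(p - 1 + D + 1) / p = -(D / p) - 1 := by field_simp; ring
        have h2 : (p - 1 + D + 1) / p = D / p + 1 := by field_simp; ring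
        rw [h1, h2, rpow_sub_one hs.ne']
        field_simp

theorem mul_log_add_ge {a b Z u : ℝ} (ha : 0 ≤ a) (hZ : 0 < Z) (hb : b = exp (-u)) :
    a - Z⁻¹ * b ≤ a * log a + a * u + log Z * a := by
  subst hb
  rcases ha.eq_or_lt with rfl | ha
  · simp only [zero_mul, zero_sub, mul_zero, add_zero]
    have : 0 ≤ Z⁻¹ * exp (-u) := by positivity
    linarith
  · have h := log_le_sub_one_of_pos (x := Z⁻¹ * exp (-u) / a) (by positivity)
    rw [log_div (by positivity) ha.ne', log_mul (by positivity) (by positivity), log_inv,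
      log_exp] at h
    have h' := mul_le_mul_of_nonneg_left h ha.le
    have : a * (Z⁻¹ * exp (-u) / a - 1) = Z⁻¹ * exp (-u) - a := by field_simp
    nlinarith

/-- Gibbs' inequality against the probability density proportional to `exp (-u)`. -/
theorem neg_integral_mul_log_le {X : Type*} [MeasurableSpace X] {ν : Measure X} {φ u : X → ℝ}
    {Z : ℝ} (hφ : ∀ x, 0 ≤ φ x) (hnorm : ∫ x, φ x ∂ν = 1)
    (hent : Integrable (fun x => φ x * log (φ x)) ν)
    (hu : Integrable (fun x => φ x * u x) ν) (hZ : 0 < Z) (hexp : ∫ x, exp (-u x) ∂ν = Z) :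
    -∫ x, φ x * log (φ x) ∂ν ≤ ∫ x, φ x * u x ∂ν + log Z := by
  have hφi : Integrable φ ν := .of_integral_ne_zero (by simp [hnorm])
  have hei : Integrable (fun x => exp (-u x)) ν := .of_integral_ne_zero (by simp [hexp, hZ.ne'])
  have h := integral_mono (f := fun x => φ x - Z⁻¹ * exp (-u x)) (hφi.sub (hei.const_mul Z⁻¹))
    ((hent.add hu).add (hφi.const_mul (log Z))) fun x =>
      mul_log_add_ge (hφ x) hZ (rfl : exp (-u x) = exp (-u x))
  rw [integral_sub hφi (hei.const_mul _), integral_add' (hent.add hu) (hφi.const_mul _),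
    integral_add' hent hu, integral_const_mul, integral_const_mul, hnorm, hexp,
    inv_mul_cancel₀ hZ.ne'] at h
  linarith

/-- Shannon's inequality for a measure whose balls grow like `t ^ D`. -/
theorem neg_integral_mul_log_le_of_measure_ball [SFinite μ] {c : ℝ} (hD : 0 < D) (hc : 0 < c)
    (hμ : ∀ t, 0 < t → μ (Metric.ball 0 t) = ENNReal.ofReal (t ^ D) * ENNReal.ofReal c)
    (hp : 0 < p) {φ : E → ℝ} (hφ : ∀ x, 0 ≤ φ x) (hnorm : ∫ x, φ x ∂μ = 1)
    (hmom : Integrable (fun x => φ x * ‖x‖ ^ p) μ)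
    (hent : Integrable (fun x => φ x * log (φ x)) μ) :
    -∫ x, φ x * log (φ x) ∂μ ≤
      D / p * log (p * (Gamma (D / p + 1) * c) ^ (p / D) * exp 1 / D *
        ∫ x, φ x * ‖x‖ ^ p ∂μ) := by
  set M := ∫ x, φ x * ‖x‖ ^ p ∂μ with hM
  have hM0 : 0 < M := by
    have hnn : ∀ x, 0 ≤ φ x * ‖x‖ ^ p := fun x => mul_nonneg (hφ x) (by positivity)
    refine (integral_nonneg hnn).lt_of_ne fun h => ?_
    have hae := (integral_eq_zero_iff_of_nonneg hnn hmom).1 h.symm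
    have hzero : μ {0} = 0 := by
      have hle : ∀ t : ℝ, 0 < t → μ {0} ≤ ENNReal.ofReal (t ^ D) * ENNReal.ofReal c :=
        fun t ht => (measure_mono (by simpa using ht)).trans_eq (hμ t ht)
      have hlim : Tendsto (fun t : ℝ => ENNReal.ofReal (t ^ D) * ENNReal.ofReal c)
          (nhdsWithin 0 (Set.Ioi 0)) (nhds 0) := by
        have h1 : Tendsto (fun t : ℝ => ENNReal.ofReal (t ^ D * c)) (nhds 0)
            (nhds (ENNReal.ofReal ((0 : ℝ) ^ D * c))) :=
          (ENNReal.continuous_ofReal.comp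
            ((continuous_id.rpow_const fun _ => Or.inr hD.le).mul_const c)).tendsto 0
        rw [zero_rpow hD.ne', zero_mul, ENNReal.ofReal_zero] at h1
        refine (h1.mono_left nhdsWithin_le_nhds).congr fun t => ?_
        exact ENNReal.ofReal_mul' hc.le
      exact le_antisymm (ge_of_tendsto hlim (eventually_nhdsWithin_of_forall hle)) zero_le
    have hφ0 : φ =ᵐ[μ] 0 := by
      have h0 : ∀ᵐ x ∂μ, x ≠ 0 := by
        simpa [ae_iff] using hzero
      filter_upwards [hae, h0] with x hx hx0
      have : ‖x‖ ^ p ≠ 0 := (rpow_pos_of_pos (norm_pos_iff.2 hx0) p).ne'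
      simpa [this] using hx
    simp [integral_congr_ae hφ0] at hnorm
  set s := D / (p * M) with hs
  have hs0 : 0 < s := by positivity
  have hΓ : 0 < Gamma (D / p + 1) := Gamma_pos_of_pos (by positivity)
  set K := Gamma (D / p + 1) * c with hK
  have hK0 : 0 < K := by positivity
  have hexp : ∫ x, exp (-(s * ‖x‖ ^ p)) ∂μ = s ^ (-(D / p)) * K := by
    rw [integral_eq_lintegral_of_nonneg_ae (Eventually.of_forall fun x => (exp_pos _).le)
      (by
        have : Measurable fun x : E => exp (-(s * ‖x‖ ^ p)) := by fun_prop
        exact this.aestronglyMeasurable)]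
    simp only [← neg_mul]
    rw [lintegral_exp_neg_mul_norm_rpow hD hμ hp hs0, ← ENNReal.ofReal_mul' hc.le,
      ENNReal.toReal_ofReal (by positivity), hK, mul_assoc]
  have hu : (fun x => φ x * (s * ‖x‖ ^ p)) = fun x => s * (φ x * ‖x‖ ^ p) := by
    funext x; ring
  have h := neg_integral_mul_log_le hφ hnorm hent (u := fun x => s * ‖x‖ ^ p)
    (by rw [hu]; exact hmom.const_mul s) (by positivity) hexp
  rw [hu, integral_const_mul, ← hM] at h
  refine h.trans_eq ?_
  have hsM : s * M = D / p := by rw [hs]; field_simp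
  have harg : p * K ^ (p / D) * exp 1 / D * M = s⁻¹ * K ^ (p / D) * exp 1 := by
    rw [hs]; field_simp
  have hs' : 0 < s ^ (-(D / p)) := by positivity
  have hK' : 0 < K ^ (p / D) := by positivity
  rw [harg, hsM, log_mul hs'.ne' hK0.ne', log_mul (by positivity) (exp_pos 1).ne',
    log_mul (inv_ne_zero hs0.ne') hK'.ne', log_rpow hs0, log_rpow hK0, log_inv, log_exp]
  field_simp
  ring

end NormPowers

section MonomialWeight

variable {ι : Type*} [Fintype ι] {A : ι → ℝ}

theorem measurableSet_monSet (A : ι → ℝ) : MeasurableSet (monSet A) := by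
  have : monSet A = ⋂ i, {x : EuclideanSpace ℝ ι | 0 < A i → 0 < x i} := by
    ext; simp [monSet]
  rw [this]
  refine MeasurableSet.iInter fun i => ?_
  by_cases h : 0 < A i
  · simp only [h, true_imp_iff]
    exact measurableSet_lt measurable_const (by fun_prop)
  · simp [h]

theorem measurable_monWeight (A : ι → ℝ) : Measurable (monWeight A) := by
  unfold monWeight
  fun_prop

theorem monWeight_nonneg (A : ι → ℝ) (x : EuclideanSpace ℝ ι) : 0 ≤ monWeight A x :=
  Finset.prod_nonneg fun _ _ => by positivity

theorem monWeight_smul (A : ι → ℝ) {t : ℝ} (ht : 0 < t) (x : EuclideanSpace ℝ ι) :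
    monWeight A (t • x) = t ^ (∑ i, A i) * monWeight A x := by
  simp only [monWeight, rpow_sum_of_pos ht, ← Finset.prod_mul_distrib]
  refine Finset.prod_congr rfl fun i _ => ?_
  rw [PiLp.smul_apply, smul_eq_mul, abs_mul, abs_of_pos ht, mul_rpow ht.le (abs_nonneg _)]

theorem smul_mem_monSet {t : ℝ} (ht : 0 < t) (x : EuclideanSpace ℝ ι) :
    t • x ∈ monSet A ↔ x ∈ monSet A := by
  simp [monSet, ht]

/-- The weighted measure `x^A dx` on `ℝ^n_A`. -/
def monMeasure (A : ι → ℝ) : Measure (EuclideanSpace ℝ ι) :=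
  (volume.restrict (monSet A)).withDensity fun x => ENNReal.ofReal (monWeight A x)

instance (A : ι → ℝ) : SFinite (monMeasure A) := by
  unfold monMeasure
  infer_instance

theorem integral_monMeasure (A : ι → ℝ) (F : EuclideanSpace ℝ ι → ℝ) :
    ∫ x, F x ∂monMeasure A = ∫ x in monSet A, F x * monWeight A x := by
  rw [monMeasure, integral_withDensity_eq_integral_toReal_smul
    (measurable_monWeight A).ennreal_ofReal (by simp)]
  simp [ENNReal.toReal_ofReal (monWeight_nonneg A _), mul_comm]

theorem integrable_monMeasure_iff (A : ι → ℝ) {F : EuclideanSpace ℝ ι → ℝ} :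
    Integrable F (monMeasure A) ↔ IntegrableOn (fun x => F x * monWeight A x) (monSet A) := by
  rw [monMeasure, integrable_withDensity_iff (measurable_monWeight A).ennreal_ofReal (by simp)]
  simp [ENNReal.toReal_ofReal (monWeight_nonneg A _), IntegrableOn]

theorem monMeasure_ball (A : ι → ℝ) {t : ℝ} (ht : 0 < t) :
    monMeasure A (Metric.ball 0 t) =
      ENNReal.ofReal (t ^ monDim A) * monMeasure A (Metric.ball 0 1) := by
  set F : ℝ → EuclideanSpace ℝ ι → ENNReal := fun r =>
    (Metric.ball 0 r ∩ monSet A).indicator fun x => ENNReal.ofReal (monWeight A x) with hF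
  have hFm : ∀ r, Measurable (F r) := fun r =>
    (measurable_monWeight A).ennreal_ofReal.indicator
      (Metric.isOpen_ball.measurableSet.inter (measurableSet_monSet A))
  have hball : ∀ r, monMeasure A (Metric.ball 0 r) = ∫⁻ x, F r x := fun r => by
    rw [monMeasure, withDensity_apply _ Metric.isOpen_ball.measurableSet,
      Measure.restrict_restrict Metric.isOpen_ball.measurableSet, hF,
      lintegral_indicator (Metric.isOpen_ball.measurableSet.inter (measurableSet_monSet A))]
  have hscale : ∀ x, F t (t • x) = ENNReal.ofReal (t ^ ∑ i, A i) * F 1 x := fun x => by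
    have hb : t • x ∈ Metric.ball 0 t ∩ monSet A ↔ x ∈ Metric.ball 0 1 ∩ monSet A := by
      simp only [Set.mem_inter_iff, smul_mem_monSet ht, mem_ball_zero_iff, norm_smul,
        Real.norm_eq_abs, abs_of_pos ht, mul_lt_iff_lt_one_right ht]
    by_cases hx : x ∈ Metric.ball 0 1 ∩ monSet A
    · simp only [hF]
      rw [Set.indicator_of_mem (hb.2 hx), Set.indicator_of_mem hx, monWeight_smul A ht,
        ENNReal.ofReal_mul (by positivity)]
    · simp only [hF]
      rw [Set.indicator_of_notMem (mt hb.1 hx), Set.indicator_of_notMem hx, mul_zero]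
  have hmap : ∫⁻ x, F t (t • x) =
      ENNReal.ofReal ((t ^ Fintype.card ι)⁻¹) * ∫⁻ x, F t x := by
    rw [← lintegral_map (hFm t) (measurable_const_smul t),
      Measure.map_addHaar_smul volume ht.ne', lintegral_smul_measure, finrank_euclideanSpace,
      abs_of_pos (by positivity), smul_eq_mul]
  simp only [hscale] at hmap
  rw [lintegral_const_mul _ (hFm 1)] at hmap
  have hcard : ENNReal.ofReal (t ^ Fintype.card ι) *
      ENNReal.ofReal ((t ^ Fintype.card ι)⁻¹) = 1 := by
    rw [← ENNReal.ofReal_mul (by positivity), mul_inv_cancel₀ (by positivity), ENNReal.ofReal_one]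
  rw [hball, hball, monDim, rpow_add ht, rpow_natCast, ENNReal.ofReal_mul (by positivity),
    mul_assoc, hmap, ← mul_assoc, hcard, one_mul]

theorem integrable_and_integral_monomial_gaussian {a : ℝ} (ha : 0 ≤ a) :
    Integrable ({t : ℝ | 0 < a → 0 < t}.indicator fun t => |t| ^ a * exp (-t ^ 2)) ∧
    ∫ t, {t : ℝ | 0 < a → 0 < t}.indicator (fun t => |t| ^ a * exp (-t ^ 2)) t =
      Gamma ((a + 1) / 2) / (if 0 < a then 2 else 1) := by
  rcases ha.eq_or_lt with rfl | ha
  · have h := integrable_exp_neg_mul_sq one_pos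
    have h' := integral_gaussian 1
    simp only [neg_mul, one_mul, div_one] at h h'
    simp [h, h', -one_div, Gamma_one_half_eq]
  · have hset : {t : ℝ | 0 < a → 0 < t} = Set.Ioi 0 := by ext; simp [ha]
    have hcongr : Set.EqOn (fun t : ℝ => |t| ^ a * exp (-t ^ 2))
        (fun t => t ^ a * exp (-1 * t ^ (2 : ℝ))) (Set.Ioi 0) := fun t (ht : 0 < t) => by
      simp [abs_of_pos ht]
    rw [hset, integrable_indicator_iff measurableSet_Ioi, integral_indicator measurableSet_Ioi,
      integrableOn_congr_fun hcongr measurableSet_Ioi,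
      setIntegral_congr_fun measurableSet_Ioi hcongr,
      integral_rpow_mul_exp_neg_mul_rpow two_pos (by linarith) one_pos]
    refine ⟨integrableOn_rpow_mul_exp_neg_mul_rpow (by linarith) two_pos one_pos, ?_⟩
    simp [ha]
    ring

/-- The Gaussian integral with a monomial weight. -/
theorem lintegral_gaussian_monMeasure (hA : ∀ i, 0 ≤ A i) :
    ∫⁻ x, ENNReal.ofReal (exp (-1 * ‖x‖ ^ (2 : ℝ))) ∂monMeasure A =
      ENNReal.ofReal ((∏ i, Gamma ((A i + 1) / 2)) / 2 ^ monK A) := by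
  set g : ι → ℝ → ℝ := fun i => {t : ℝ | 0 < A i → 0 < t}.indicator
    fun t => |t| ^ A i * exp (-t ^ 2) with hg
  have hg0 : ∀ i t, 0 ≤ g i t := fun i t =>
    Set.indicator_nonneg (fun t _ => by positivity) t
  have hgi : Integrable fun y : ι → ℝ => ∏ i, g i (y i) :=
    Integrable.fintype_prod fun i => (integrable_and_integral_monomial_gaussian (hA i)).1
  have hprod : ∫ y : ι → ℝ, ∏ i, g i (y i) = (∏ i, Gamma ((A i + 1) / 2)) / 2 ^ monK A := by
    rw [integral_fintype_prod_volume_eq_prod]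
    simp only [hg, (integrable_and_integral_monomial_gaussian (hA _)).2]
    rw [Finset.prod_div_distrib]
    congr 1
    rw [Finset.prod_ite, Finset.prod_const, Finset.prod_const_one, mul_one, monK,
      Nat.card_eq_fintype_card, Fintype.card_subtype]
  have hexp : ∀ x : EuclideanSpace ℝ ι, (monSet A).indicator
      (fun x => ENNReal.ofReal (monWeight A x) * ENNReal.ofReal (exp (-1 * ‖x‖ ^ (2 : ℝ)))) x =
        ENNReal.ofReal (∏ i, g i (x i)) := fun x => by
    by_cases hx : x ∈ monSet A
    · have hgx : ∀ i, g i (x i) = |x i| ^ A i * exp (-x i ^ 2) := fun i =>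
        Set.indicator_of_mem (s := {t : ℝ | 0 < A i → 0 < t}) (hx i) _
      simp only [hgx]
      rw [Set.indicator_of_mem hx, ← ENNReal.ofReal_mul (monWeight_nonneg A x),
        Finset.prod_mul_distrib, ← exp_sum, monWeight, rpow_two, EuclideanSpace.norm_sq_eq]
      simp
    · obtain ⟨i, hi⟩ : ∃ i, ¬ (0 < A i → 0 < x i) := by simpa [monSet] using hx
      rw [Set.indicator_of_notMem hx, Finset.prod_eq_zero (Finset.mem_univ i)
        (Set.indicator_of_notMem (s := {t : ℝ | 0 < A i → 0 < t}) hi _), ENNReal.ofReal_zero]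
  rw [monMeasure, lintegral_withDensity_eq_lintegral_mul _
    (measurable_monWeight A).ennreal_ofReal (by fun_prop),
    ← lintegral_indicator (measurableSet_monSet A)]
  refine (lintegral_congr hexp).trans ?_
  rw [← hprod, ofReal_integral_eq_lintegral_ofReal hgi
    (Eventually.of_forall fun y => Finset.prod_nonneg fun i _ => hg0 i _)]
  exact (EuclideanSpace.volume_preserving_symm_measurableEquiv_toLp ι).lintegral_comp_emb
    (MeasurableEquiv.measurableEmbedding _) fun y : ι → ℝ => ENNReal.ofReal (∏ i, g i (y i))

theorem monMeasure_unitBall (hA : ∀ i, 0 ≤ A i) (hD : 0 < monDim A) :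
    monMeasure A (Metric.ball 0 1) =
      ENNReal.ofReal ((∏ i, Gamma ((A i + 1) / 2)) / 2 ^ monK A / Gamma (monDim A / 2 + 1)) := by
  have hΓ : 0 < Gamma (monDim A / 2 + 1) := Gamma_pos_of_pos (by positivity)
  have h := lintegral_exp_neg_mul_norm_rpow hD (fun t ht => monMeasure_ball A ht) two_pos one_pos
  rw [lintegral_gaussian_monMeasure hA, one_rpow, one_mul] at h
  rw [ENNReal.ofReal_div_of_pos hΓ, h, ENNReal.eq_div_iff (by simpa using hΓ) ENNReal.ofReal_ne_top]

end MonomialWeight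

/-- the Shannon type inequality with monomial weights.
(Recall `Real.log 0 = 0`, so `|f| log |f|` vanishes where `f = 0`.) -/
theorem shannon_monomial_weight {n : ℕ} (hn : 0 < n) (A : Fin n → ℝ) (hA : ∀ i, 0 ≤ A i)
    (α : ℝ) (hα : 0 < α)
    (f : EuclideanSpace ℝ (Fin n) → ℝ) (hf : Measurable f)
    (hnorm : ∫ x in monSet A, |f x| * monWeight A x = 1)
    (hmom : IntegrableOn (fun x => |f x| * ‖x‖ ^ α * monWeight A x) (monSet A))
    (hent : IntegrableOn (fun x => |f x| * log |f x| * monWeight A x) (monSet A)) :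
    -∫ x in monSet A, |f x| * log |f x| * monWeight A x ≤
      monDim A / α *
        log (α * monCA A α * exp 1 / monDim A *
          ∫ x in monSet A, |f x| * ‖x‖ ^ α * monWeight A x) := by
  have hD : 0 < monDim A := by
    have h1 : 0 ≤ ∑ i, A i := Finset.sum_nonneg fun i _ => hA i
    have h2 : (0 : ℝ) < n := by exact_mod_cast hn
    simp only [monDim, Fintype.card_fin]
    linarith
  have hG : 0 < (∏ i, Gamma ((A i + 1) / 2)) / 2 ^ monK A :=
    div_pos (Finset.prod_pos fun i _ => Gamma_pos_of_pos (by linarith [hA i])) (by positivity)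
  have hΓ : 0 < Gamma (monDim A / 2 + 1) := Gamma_pos_of_pos (by positivity)
  have hpi : monPi A ^ (monDim A / 2) = (∏ i, Gamma ((A i + 1) / 2)) / 2 ^ monK A := by
    rw [monPi, ← rpow_mul hG.le, div_mul_div_cancel₀' two_ne_zero, div_self hD.ne', rpow_one]
  have h := neg_integral_mul_log_le_of_measure_ball hD (div_pos hG hΓ)
    (fun t ht => by rw [monMeasure_ball A ht, monMeasure_unitBall hA hD]) hα
    (φ := fun x => |f x|) (fun x => abs_nonneg _) (by rw [integral_monMeasure, hnorm])
    ((integrable_monMeasure_iff A).2 hmom) ((integrable_monMeasure_iff A).2 hent)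
  rw [integral_monMeasure, integral_monMeasure] at h
  have hC : monCA A α = (Gamma (monDim A / α + 1) *
      ((∏ i, Gamma ((A i + 1) / 2)) / 2 ^ monK A / Gamma (monDim A / 2 + 1))) ^
        (α / monDim A) := by
    rw [monCA, hpi]
    congr 1
    ring
  rw [hC]
  exact h
end
end
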